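/- arXiv:1109.1252 — 3 statements merged into one kernel-verified Lean document; each statement's English description precedes it below -/
import Mathlib

section
/- Let φ : ℝ^d → ℝ have continuous partial derivatives up to order k ≥ 2, η : ℝ^d → ℂ be C¹ with compact support in an open ball B, and suppose |∂^k φ / ∂y_j^k(y)| ≥ α > 0 for all y ∈ B and some fixed j. Then |∫_{ℝ^d} e^{iφ(y)} η(y) dy| ≤ (c_k / α^{1/k}) ∫_{ℝ^d} |∂η/∂y_j(y)| dy, with c_k = 5·2^{k−1} − 2. -/
open MeasureTheory

theorem vdc_base (f : ℝ → ℝ) (hf : ContDiff ℝ 2 f) (a b μ : ℝ) (hab : a ≤ b) (hμ : 0 < μ)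
    (h2 : ∀ x ∈ Set.Icc a b, 0 ≤ deriv (deriv f) x)
    (h1 : ∀ x ∈ Set.Icc a b, μ ≤ |deriv f x|) :
    ‖∫ t in a..b, Complex.exp (Complex.I * (f t : ℂ))‖ ≤ 3 / μ := by
  have hd1 : ContDiff ℝ 1 (deriv f) := by
    have : ContDiff ℝ (1+1) f := by simpa [one_add_one_eq_two] using hf
    exact (contDiff_succ_iff_deriv.1 this).2.2
  have hc2 : Continuous (deriv (deriv f)) := hd1.continuous_deriv (le_refl _)
  have hc1 : Continuous (deriv f) := hd1.continuous
  have hc0 : Continuous f := hf.continuous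
  have hD0 : ∀ x, HasDerivAt f (deriv f x) x := fun x =>
    ((hf.differentiable (by norm_num)) x).hasDerivAt
  have hD1 : ∀ x, HasDerivAt (deriv f) (deriv (deriv f) x) x := fun x =>
    ((hd1.differentiable (by norm_num)) x).hasDerivAt
  have hne : ∀ x ∈ Set.Icc a b, deriv f x ≠ 0 := by
    intro x hx h
    have := h1 x hx
    rw [h, abs_zero] at this
    linarith
  have hu : Set.uIcc a b = Set.Icc a b := Set.uIcc_of_le hab
  -- real primitive
  have hR : ∫ t in a..b, deriv (deriv f) t / (deriv f t)^2 = (deriv f a)⁻¹ - (deriv f b)⁻¹ := by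
    have hder : ∀ x ∈ Set.uIcc a b, HasDerivAt (fun t => -(deriv f t)⁻¹)
        (deriv (deriv f) x / (deriv f x)^2) x := by
      intro x hx
      rw [hu] at hx
      have := ((hD1 x).inv (hne x hx)).neg
      exact this.congr_deriv (by ring)
    rw [intervalIntegral.integral_eq_sub_of_hasDerivAt hder]
    · ring
    · apply ContinuousOn.intervalIntegrable
      rw [hu]
      exact hc2.continuousOn.div (hc1.continuousOn.pow 2) (fun x hx => pow_ne_zero 2 (hne x hx))
  have hce : Continuous (fun t => Complex.exp (Complex.I * (f t : ℂ))) := by fun_prop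
  have hcont2 : ContinuousOn (fun t => Complex.exp (Complex.I * (f t : ℂ)) *
      (((deriv (deriv f) t : ℝ) : ℂ) / (Complex.I * ((deriv f t : ℝ) : ℂ)^2))) (Set.Icc a b) := by
    apply hce.continuousOn.mul
    apply ContinuousOn.div
    · fun_prop
    · fun_prop
    · intro x hx
      have := hne x hx
      simp [this]
  have hI : ∫ t in a..b, (Complex.exp (Complex.I * (f t : ℂ)) -
      Complex.exp (Complex.I * (f t : ℂ)) *
      (((deriv (deriv f) t : ℝ) : ℂ) / (Complex.I * ((deriv f t : ℝ) : ℂ)^2))) =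
      Complex.exp (Complex.I * (f b : ℂ)) * (Complex.I * ((deriv f b : ℝ) : ℂ))⁻¹ -
      Complex.exp (Complex.I * (f a : ℂ)) * (Complex.I * ((deriv f a : ℝ) : ℂ))⁻¹ := by
    apply intervalIntegral.integral_eq_sub_of_hasDerivAt
      (f := fun t => Complex.exp (Complex.I * (f t : ℂ)) * (Complex.I * ((deriv f t : ℝ) : ℂ))⁻¹)
    · intro x hx
      rw [hu] at hx
      have hn : ((deriv f x : ℝ) : ℂ) ≠ 0 := by exact_mod_cast hne x hx
      have e1 := (((hD0 x).ofReal_comp).const_mul Complex.I).cexp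
      have e2 := (((hD1 x).ofReal_comp).const_mul Complex.I).inv
        (mul_ne_zero Complex.I_ne_zero hn)
      refine (e1.mul e2).congr_deriv ?_
      have hI0 := Complex.I_ne_zero
      simp only [Pi.inv_apply]
      field_simp
      try ring_nf
    · apply ContinuousOn.intervalIntegrable
      rw [hu]
      exact hce.continuousOn.sub hcont2
  rw [intervalIntegral.integral_sub (hce.intervalIntegrable _ _)
    (ContinuousOn.intervalIntegrable (by rwa [hu]))] at hI
  have hI' := sub_eq_iff_eq_add.1 hI
  have nexp : ∀ t, ‖Complex.exp (Complex.I * (f t : ℂ))‖ = 1 := by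
    intro t; rw [mul_comm]; exact Complex.norm_exp_ofReal_mul_I _
  have hbd : ∀ x ∈ Set.Icc a b, ‖Complex.exp (Complex.I * (f x : ℂ)) *
      (Complex.I * ((deriv f x : ℝ) : ℂ))⁻¹‖ ≤ 1 / μ := by
    intro x hx
    rw [norm_mul, nexp, one_mul, norm_inv, norm_mul, Complex.norm_I, one_mul, Complex.norm_real,
      Real.norm_eq_abs, ← one_div]
    exact one_div_le_one_div_of_le hμ (h1 x hx)
  have hbd2 : ‖∫ t in a..b, Complex.exp (Complex.I * (f t : ℂ)) *
      (((deriv (deriv f) t : ℝ) : ℂ) / (Complex.I * ((deriv f t : ℝ) : ℂ)^2))‖ ≤ 1 / μ := by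
    have ha : a ∈ Set.Icc a b := ⟨le_refl _, hab⟩
    have hb : b ∈ Set.Icc a b := ⟨hab, le_refl _⟩
    calc _ ≤ ∫ t in a..b, ‖Complex.exp (Complex.I * (f t : ℂ)) *
      (((deriv (deriv f) t : ℝ) : ℂ) / (Complex.I * ((deriv f t : ℝ) : ℂ)^2))‖ :=
          intervalIntegral.norm_integral_le_integral_norm hab
      _ = ∫ t in a..b, deriv (deriv f) t / (deriv f t)^2 := by
          apply intervalIntegral.integral_congr
          intro x hx
          rw [hu] at hx
          simp only [norm_mul, nexp, norm_div, norm_pow, Complex.norm_I, Complex.norm_real,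
            Real.norm_eq_abs, one_mul, sq_abs, abs_of_nonneg (h2 x hx)]
      _ = (deriv f a)⁻¹ - (deriv f b)⁻¹ := hR
      _ ≤ 1 / μ := by
          have hm : deriv f a ≤ deriv f b := by
            have : MonotoneOn (deriv f) (Set.Icc a b) := by
              apply monotoneOn_of_deriv_nonneg (convex_Icc a b) hc1.continuousOn
              · exact (hd1.differentiable (by norm_num)).differentiableOn
              · intro x hx
                exact h2 x (interior_subset hx)
            exact this ha hb hab
          have ka : |(deriv f a)⁻¹| ≤ 1 / μ := by
            rw [abs_inv, ← one_div]; exact one_div_le_one_div_of_le hμ (h1 a ha)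
          have kb : |(deriv f b)⁻¹| ≤ 1 / μ := by
            rw [abs_inv, ← one_div]; exact one_div_le_one_div_of_le hμ (h1 b hb)
          rw [abs_le] at ka kb
          rcases lt_or_ge 0 (deriv f b) with h | h
          · have := inv_pos.2 h
            linarith
          · have := inv_nonpos.2 (hm.trans h)
            linarith
  rw [hI']
  refine (norm_add_le _ _).trans ?_
  have := (norm_sub_le (Complex.exp (Complex.I * (f b : ℂ)) * (Complex.I * ((deriv f b : ℝ) : ℂ))⁻¹)
    (Complex.exp (Complex.I * (f a : ℂ)) * (Complex.I * ((deriv f a : ℝ) : ℂ))⁻¹))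
  have q1 := hbd a ⟨le_refl _, hab⟩
  have q2 := hbd b ⟨hab, le_refl _⟩
  have : 3 / μ = 1/μ + 1/μ + 1/μ := by ring
  linarith

theorem vdc_step (f g : ℝ → ℝ) (hf : Continuous f) (hg : Continuous g) (a b lam C : ℝ) (k : ℕ)
    (hk : 1 ≤ k) (hab : a ≤ b) (hl : 0 < lam) (hC : 0 ≤ C)
    (hs : ∀ x ∈ Set.Icc a b, ∀ y ∈ Set.Icc a b, x ≤ y → lam * (y - x) ≤ g y - g x)
    (H : ∀ a' b' μ, a ≤ a' → a' ≤ b' → b' ≤ b → 0 < μ → (∀ x ∈ Set.Icc a' b', μ ≤ |g x|) →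
      ‖∫ t in a'..b', Complex.exp (Complex.I * (f t : ℂ))‖ ≤ C / μ ^ ((1:ℝ)/k)) :
    ‖∫ t in a..b, Complex.exp (Complex.I * (f t : ℂ))‖ ≤
      (2 * C + 2) / lam ^ ((1:ℝ)/((k+1 : ℕ):ℝ)) := by
  have ha : a ∈ Set.Icc a b := ⟨le_refl _, hab⟩
  have hb : b ∈ Set.Icc a b := ⟨hab, le_refl _⟩
  obtain ⟨c, hc, hc1, hc2⟩ : ∃ c ∈ Set.Icc a b,
      (∀ x ∈ Set.Icc a b, c < x → lam * (x - c) ≤ g x) ∧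
      (∀ x ∈ Set.Icc a b, x < c → g x ≤ - (lam * (c - x))) := by
    by_cases h0 : 0 ≤ g a
    · exact ⟨a, ha, fun x hx hx' => by have := hs a ha x hx hx'.le; linarith,
        fun x hx hx' => absurd hx.1 (not_le.2 hx')⟩
    · by_cases h1 : g b ≤ 0
      · exact ⟨b, hb, fun x hx hx' => absurd hx.2 (not_le.2 hx'),
          fun x hx hx' => by have := hs x hx b hb hx'.le; linarith⟩
      · obtain ⟨c, hc, hc0⟩ := intermediate_value_Icc hab hg.continuousOn
          (show (0:ℝ) ∈ Set.Icc (g a) (g b) from ⟨by linarith, by linarith⟩)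
        refine ⟨c, hc, fun x hx hx' => ?_, fun x hx hx' => ?_⟩
        · have := hs c hc x hx hx'.le; linarith
        · have := hs x hx c hc hx'.le; linarith
  have hk0 : (0:ℝ) < k := by exact_mod_cast hk
  set p : ℝ := (1:ℝ)/((k+1 : ℕ):ℝ) with hp
  set δ : ℝ := lam ^ (-p) with hδ
  have hδ0 : 0 < δ := Real.rpow_pos_of_pos hl _
  have hlp : 0 < lam ^ p := Real.rpow_pos_of_pos hl _
  have hδe : δ = 1 / lam ^ p := by rw [hδ, Real.rpow_neg hl.le, one_div]
  have hpow : (lam * δ) ^ ((1:ℝ)/k) = lam ^ p := by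
    have : lam * δ = lam ^ (1 - p) := by
      rw [hδ, sub_eq_add_neg, Real.rpow_add hl, Real.rpow_one]
    rw [this, ← Real.rpow_mul hl.le]
    congr 1
    rw [hp]; push_cast
    field_simp
    ring
  have hld : 0 < lam * δ := mul_pos hl hδ0
  have hCp : 0 ≤ C / lam ^ p := by positivity
  set e : ℝ → ℂ := fun t => Complex.exp (Complex.I * (f t : ℂ)) with he
  have hce : Continuous e := by rw [he]; fun_prop
  have nexp : ∀ t, ‖e t‖ = 1 := by
    intro t; simp only [he]; rw [mul_comm]; exact Complex.norm_exp_ofReal_mul_I _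
  obtain ⟨hca, hcb⟩ := hc
  have hu : ∃ u, a ≤ u ∧ u ≤ c ∧ c - δ ≤ u ∧ ‖∫ t in a..u, e t‖ ≤ C / lam ^ p := by
    by_cases h : c - δ ≤ a
    · exact ⟨a, le_refl _, hca, h, by simpa using hCp⟩
    · push Not at h
      refine ⟨c - δ, h.le, by linarith, le_refl _, ?_⟩
      rw [← hpow]
      refine H a (c - δ) _ (le_refl _) h.le (by linarith) hld (fun x hx => ?_)
      have h1 := hc2 x ⟨hx.1, by linarith [hx.2]⟩ (by linarith [hx.2])
      have h2 : lam * δ ≤ lam * (c - x) := mul_le_mul_of_nonneg_left (by linarith [hx.2]) hl.le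
      have := neg_le_abs (g x)
      linarith
  have hv : ∃ v, v ≤ b ∧ c ≤ v ∧ v ≤ c + δ ∧ ‖∫ t in v..b, e t‖ ≤ C / lam ^ p := by
    by_cases h : b ≤ c + δ
    · exact ⟨b, le_refl _, hcb, h, by simpa using hCp⟩
    · push Not at h
      refine ⟨c + δ, h.le, by linarith, le_refl _, ?_⟩
      rw [← hpow]
      refine H (c + δ) b _ (by linarith) h.le (le_refl _) hld (fun x hx => ?_)
      have h1 := hc1 x ⟨by linarith [hx.1], hx.2⟩ (by linarith [hx.1])
      have h2 : lam * δ ≤ lam * (x - c) := mul_le_mul_of_nonneg_left (by linarith [hx.1]) hl.le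
      have := le_abs_self (g x)
      linarith
  obtain ⟨u, hau, huc, hu1, hu2⟩ := hu
  obtain ⟨v, hvb, hcv, hv1, hv2⟩ := hv
  have hmid : ‖∫ t in u..v, e t‖ ≤ 2 * δ := by
    have := intervalIntegral.norm_integral_le_of_norm_le_const (f := e) (a := u) (b := v) (C := 1)
      (fun x _ => (nexp x).le)
    rw [abs_of_nonneg (by linarith)] at this
    linarith
  have hii : ∀ x y, IntervalIntegrable e volume x y := fun x y => hce.intervalIntegrable x y
  rw [← intervalIntegral.integral_add_adjacent_intervals (hii a v) (hii v b),
    ← intervalIntegral.integral_add_adjacent_intervals (hii a u) (hii u v)]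
  refine (norm_add_le _ _).trans ?_
  have := norm_add_le (∫ t in a..u, e t) (∫ t in u..v, e t)
  have e1 : (2 * C + 2) / lam ^ p = C / lam ^ p + 2 * δ + C / lam ^ p := by rw [hδe]; ring
  linarith

theorem vdc_slope (g : ℝ → ℝ) (hg : Differentiable ℝ g) (a b lam : ℝ)
    (h : ∀ x ∈ Set.Icc a b, lam ≤ deriv g x) :
    ∀ x ∈ Set.Icc a b, ∀ y ∈ Set.Icc a b, x ≤ y → lam * (y - x) ≤ g y - g x :=
  Convex.mul_sub_le_image_sub_of_le_deriv (convex_Icc a b) hg.continuous.continuousOn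
    hg.differentiableOn (fun x hx => h x (interior_subset hx))

theorem vdc_neg (f : ℝ → ℝ) (a b : ℝ) :
    ‖∫ t in a..b, Complex.exp (Complex.I * ((-f) t : ℝ))‖ =
    ‖∫ t in a..b, Complex.exp (Complex.I * (f t : ℂ))‖ := by
  have : ∀ t, Complex.exp (Complex.I * ((-f) t : ℝ)) =
      (starRingEnd ℂ) (Complex.exp (Complex.I * (f t : ℂ))) := by
    intro t
    rw [← Complex.exp_conj]
    simp
  simp_rw [this]
  rw [intervalIntegral.intervalIntegral_eq_integral_uIoc,
    intervalIntegral.intervalIntegral_eq_integral_uIoc, integral_conj, norm_smul, norm_smul,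
    RCLike.norm_conj]

theorem vdc_sign (g : ℝ → ℝ) (hg : Continuous g) (a b lam : ℝ) (hab : a ≤ b) (hl : 0 < lam)
    (h : ∀ x ∈ Set.Icc a b, lam ≤ |g x|) :
    (∀ x ∈ Set.Icc a b, lam ≤ g x) ∨ (∀ x ∈ Set.Icc a b, lam ≤ - g x) := by
  by_contra hcon
  push Not at hcon
  obtain ⟨⟨x, hx, hx'⟩, ⟨y, hy, hy'⟩⟩ := hcon
  have h1 : g x ≤ 0 := by
    by_contra h0
    push Not at h0
    have := h x hx
    rw [abs_of_pos h0] at this; linarith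
  have h2 : 0 ≤ g y := by
    by_contra h0
    push Not at h0
    have := h y hy
    rw [abs_of_neg h0] at this; linarith
  obtain ⟨z, hz, hz0⟩ := (isPreconnected_Icc (a := a) (b := b)).intermediate_value hx hy
    hg.continuousOn (show (0:ℝ) ∈ Set.Icc (g x) (g y) from ⟨h1, h2⟩)
  have := h z hz
  rw [hz0, abs_zero] at this
  linarith

theorem vdc_main (k : ℕ) (hk : 2 ≤ k) : ∀ (f : ℝ → ℝ) (a b lam : ℝ), ContDiff ℝ (k : ℕ∞) f →
    a ≤ b → 0 < lam → (∀ x ∈ Set.Icc a b, lam ≤ |iteratedDeriv k f x|) →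
    ‖∫ t in a..b, Complex.exp (Complex.I * (f t : ℂ))‖ ≤
      (5 * 2 ^ (k - 1) - 2 : ℝ) / lam ^ ((1:ℝ)/k) := by
  -- reduction to a positive derivative
  have red : ∀ k : ℕ, (∀ (f : ℝ → ℝ) (a b lam : ℝ), ContDiff ℝ (k : ℕ∞) f →
    a ≤ b → 0 < lam → (∀ x ∈ Set.Icc a b, lam ≤ iteratedDeriv k f x) →
    ‖∫ t in a..b, Complex.exp (Complex.I * (f t : ℂ))‖ ≤
      (5 * 2 ^ (k - 1) - 2 : ℝ) / lam ^ ((1:ℝ)/k)) →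
    ∀ (f : ℝ → ℝ) (a b lam : ℝ), ContDiff ℝ (k : ℕ∞) f →
    a ≤ b → 0 < lam → (∀ x ∈ Set.Icc a b, lam ≤ |iteratedDeriv k f x|) →
    ‖∫ t in a..b, Complex.exp (Complex.I * (f t : ℂ))‖ ≤
      (5 * 2 ^ (k - 1) - 2 : ℝ) / lam ^ ((1:ℝ)/k) := by
    intro k H f a b lam hf hab hl h
    rcases vdc_sign _ (hf.continuous_iteratedDeriv k (le_refl _)) a b lam hab hl h with h' | h'
    · exact H f a b lam hf hab hl h'
    · rw [← vdc_neg]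
      refine H (-f) a b lam hf.neg hab hl (fun x hx => ?_)
      rw [iteratedDeriv_neg]
      exact h' x hx
  induction k, hk using Nat.le_induction with
  | base =>
    apply red
    intro f a b lam hf hab hl h
    have hf2 : ContDiff ℝ 2 f := by exact_mod_cast hf
    have hdf : Differentiable ℝ (deriv f) := by
      have := hf2.differentiable_iteratedDeriv 1 (by norm_num)
      rwa [iteratedDeriv_one] at this
    have h' : ∀ x ∈ Set.Icc a b, lam ≤ deriv (deriv f) x := by
      intro x hx
      have := h x hx
      rwa [iteratedDeriv_succ, iteratedDeriv_one] at this
    have := vdc_step f (deriv f) hf.continuous hdf.continuous a b lam 3 1 (le_refl _) hab hl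
      (by norm_num) (vdc_slope _ hdf a b lam h') (by
        intro a' b' μ h1 h2 h3 h4 h5
        have := vdc_base f hf2 a' b' μ h2 h4
          (fun x hx => hl.le.trans (h' x ⟨h1.trans hx.1, hx.2.trans h3⟩)) h5
        simpa using this)
    convert this using 2
    norm_num
  | succ k hk ih =>
    apply red
    intro f a b lam hf hab hl h
    have hdf : Differentiable ℝ (iteratedDeriv k f) :=
      hf.differentiable_iteratedDeriv k (by exact_mod_cast Nat.lt_succ_self k)
    have h' : ∀ x ∈ Set.Icc a b, lam ≤ deriv (iteratedDeriv k f) x := by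
      intro x hx
      have := h x hx
      rwa [iteratedDeriv_succ] at this
    have hC : (0:ℝ) ≤ 5 * 2 ^ (k - 1) - 2 := by
      have : (1:ℝ) ≤ 2 ^ (k-1) := one_le_pow₀ (by norm_num)
      linarith
    have := vdc_step f (iteratedDeriv k f) hf.continuous hdf.continuous a b lam _ k (by omega)
      hab hl hC (vdc_slope _ hdf a b lam h') (by
        intro a' b' μ h1 h2 h3 h4 h5
        exact ih f a' b' μ (hf.of_le (by exact_mod_cast Nat.le_succ k)) h2 h4 h5)
    convert this using 2
    obtain ⟨m, rfl⟩ : ∃ m, k = m + 1 := ⟨k - 1, by omega⟩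
    simp only [Nat.add_sub_cancel]
    ring

theorem vdc_amp (k : ℕ) (hk : 2 ≤ k) (f : ℝ → ℝ) (a b lam : ℝ) (hf : ContDiff ℝ (k : ℕ∞) f)
    (hab : a < b) (hl : 0 < lam) (h : ∀ x ∈ Set.Ioo a b, lam ≤ |iteratedDeriv k f x|)
    (E : ℝ → ℂ) (hE : ContDiff ℝ 1 E) (hsE : ∀ x, E x ≠ 0 → x ∈ Set.Ioo a b) :
    ‖∫ t, Complex.exp (Complex.I * (f t : ℂ)) * E t‖ ≤
      (5 * 2 ^ (k - 1) - 2 : ℝ) / lam ^ ((1:ℝ)/k) * ∫ t, ‖deriv E t‖ := by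
  set C : ℝ := (5 * 2 ^ (k - 1) - 2 : ℝ) / lam ^ ((1:ℝ)/k) with hCdef
  have hcl : ∀ x ∈ Set.Icc a b, lam ≤ |iteratedDeriv k f x| := by
    intro x hx
    rw [← closure_Ioo hab.ne] at hx
    exact le_on_closure (f := fun _ => lam) (g := fun x => |iteratedDeriv k f x|) h
      continuousOn_const (hf.continuous_iteratedDeriv k (le_refl _)).abs.continuousOn hx
  set e : ℝ → ℂ := fun t => Complex.exp (Complex.I * (f t : ℂ)) with he
  have hf0 := hf.continuous
  have hce : Continuous e := by rw [he]; fun_prop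
  have hF : ∀ x ∈ Set.Icc a b, ‖∫ t in a..x, e t‖ ≤ C := by
    intro x hx
    exact vdc_main k hk f a x lam hf hx.1 hl (fun y hy => hcl y ⟨hy.1, hy.2.trans hx.2⟩)
  have hC0 : 0 ≤ C := (norm_nonneg _).trans (hF a ⟨le_refl _, hab.le⟩)
  have hEa : E a = 0 := by
    by_contra hh; exact lt_irrefl _ (hsE a hh).1
  have hEb : E b = 0 := by
    by_contra hh; exact lt_irrefl _ (hsE b hh).2
  have hcE' : Continuous (deriv E) := hE.continuous_deriv (le_refl _)
  have hcs : HasCompactSupport E := by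
    refine HasCompactSupport.intro (isCompact_Icc (a := a) (b := b)) (fun x hx => ?_)
    by_contra hh
    exact hx (Set.Ioo_subset_Icc_self (hsE x hh))
  have hint : Integrable (fun t => ‖deriv E t‖) :=
    (hcE'.integrable_of_hasCompactSupport hcs.deriv).norm
  have h1 : ∫ t, e t * E t = ∫ t in a..b, e t * E t := by
    rw [intervalIntegral.integral_eq_integral_of_support_subset]
    intro x hx
    exact Set.Ioo_subset_Ioc_self (hsE x (right_ne_zero_of_mul hx))
  have h2 : ∫ t in a..b, e t * E t = - ∫ t in a..b, (∫ s in a..t, e s) * deriv E t := by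
    have := intervalIntegral.integral_deriv_mul_eq_sub (a := a) (b := b)
      (u := fun t => ∫ s in a..t, e s) (v := E) (u' := e) (v' := deriv E)
      (fun x _ => intervalIntegral.integral_hasDerivAt_right (hce.intervalIntegrable _ _)
        (hce.stronglyMeasurableAtFilter _ _) hce.continuousAt)
      (fun x _ => ((hE.differentiable (by norm_num)) x).hasDerivAt)
      (hce.intervalIntegrable _ _) (hcE'.intervalIntegrable _ _)
    rw [hEa, hEb, mul_zero, mul_zero, sub_zero, intervalIntegral.integral_add] at this
    · exact eq_neg_of_add_eq_zero_left this
    · exact (hce.mul hE.continuous).intervalIntegrable _ _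
    · exact ((intervalIntegral.continuous_primitive (fun x y => hce.intervalIntegrable x y) a).mul
        hcE').intervalIntegrable _ _
  rw [h1, h2, norm_neg]
  calc _ ≤ ∫ t in a..b, C * ‖deriv E t‖ := by
        apply intervalIntegral.norm_integral_le_of_norm_le hab.le
        · refine Filter.Eventually.of_forall (fun t ht => ?_)
          rw [norm_mul]
          exact mul_le_mul_of_nonneg_right (hF t (Set.Ioc_subset_Icc_self ht)) (norm_nonneg _)
        · exact (hcE'.norm.const_mul C |> fun h => h.intervalIntegrable _ _)
    _ = C * ∫ t in a..b, ‖deriv E t‖ := by rw [intervalIntegral.integral_const_mul]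
    _ ≤ C * ∫ t, ‖deriv E t‖ := by
        apply mul_le_mul_of_nonneg_left _ hC0
        rw [intervalIntegral.integral_of_le hab.le]
        exact setIntegral_le_integral hint (Filter.Eventually.of_forall fun t => norm_nonneg _)

theorem vdc_iter {V : Type*} [NormedAddCommGroup V] [NormedSpace ℝ V] (k : ℕ) (φ : V → ℝ)
    (hφ : ContDiff ℝ (k : ℕ∞) φ) (y v : V) (t : ℝ) :
    iteratedDeriv k (fun s : ℝ => φ (y + s • v)) t =
      iteratedFDeriv ℝ k φ (y + t • v) (fun _ => v) := by
  have h1 : ContDiff ℝ (k : ℕ∞) (fun z => φ (y + z)) := hφ.comp (contDiff_const.add contDiff_id)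
  have := (ContinuousLinearMap.toSpanSingleton ℝ v).iteratedFDeriv_comp_right
    (f := fun z => φ (y + z)) h1 t (i := k) (le_refl _)
  rw [iteratedDeriv_eq_iteratedFDeriv]
  have h2 : (fun s : ℝ => φ (y + s • v)) =
    (fun z => φ (y + z)) ∘ (ContinuousLinearMap.toSpanSingleton ℝ v) := by
    ext s; simp
  rw [h2, this, iteratedFDeriv_comp_add_left]
  simp

/-- Multidimensional corollary of the van der Corput lemma: if the `k`-th pure
partial derivative of the phase `φ` in the `j`-th direction is bounded below by
`α > 0` on an open ball `B` containing the support of the `C¹` amplitude `η`,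
then `|∫ e^{iφ} η| ≤ (c_k/α^{1/k}) ∫ |∂η/∂y_j|`, with `c_k = 5·2^{k−1} − 2`. -/
theorem van_der_corput_multidim (d k : ℕ) (hk : 2 ≤ k)
    (φ : (Fin d → ℝ) → ℝ) (hφ : ContDiff ℝ (k : ℕ∞) φ)
    (c : Fin d → ℝ) (r : ℝ) (hr : 0 < r)
    (η : (Fin d → ℝ) → ℂ) (hη : ContDiff ℝ 1 η) (hcpt : HasCompactSupport η)
    (hsupp : tsupport η ⊆ Metric.ball c r)
    (j : Fin d) (α : ℝ) (hα : 0 < α)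
    (hlow : ∀ y ∈ Metric.ball c r,
      α ≤ |iteratedFDeriv ℝ k φ y (fun _ => Pi.single j 1)|) :
    ‖∫ y : Fin d → ℝ, Complex.exp (Complex.I * ((φ y : ℝ) : ℂ)) * η y‖ ≤
      ((5 * 2 ^ (k - 1) - 2 : ℝ) / α ^ ((1 : ℝ) / k)) *
        ∫ y : Fin d → ℝ, ‖fderiv ℝ η y (Pi.single j 1)‖ := by
  obtain _ | n := d
  · exact j.elim0
  set v : Fin (n+1) → ℝ := Pi.single j 1 with hv
  set C : ℝ := (5 * 2 ^ (k - 1) - 2 : ℝ) / α ^ ((1 : ℝ) / k) with hC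
  set G : (Fin (n+1) → ℝ) → ℂ := fun y => Complex.exp (Complex.I * ((φ y : ℝ) : ℂ)) * η y with hG
  set N : (Fin (n+1) → ℝ) → ℝ := fun y => ‖fderiv ℝ η y v‖ with hN
  have hφ0 := hφ.continuous
  have hη0 := hη.continuous
  have hcG : Continuous G := by rw [hG]; fun_prop
  have hGi : Integrable G := hcG.integrable_of_hasCompactSupport hcpt.mul_left
  have hcN : Continuous N := ((hη.continuous_fderiv (by norm_num)).clm_apply continuous_const).norm
  have hNi : Integrable N := by
    apply hcN.integrable_of_hasCompactSupport
    refine (hcpt.fderiv (𝕜 := ℝ)).mono' (fun x hx => subset_closure ?_)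
    intro h0
    apply hx
    simp [hN, h0]
  have hmp := (volume_preserving_piFinSuccAbove (fun _ : Fin (n+1) => ℝ) j).symm
  have hins : ∀ (t : ℝ) (y : Fin n → ℝ),
      (MeasurableEquiv.piFinSuccAbove (fun _ : Fin (n+1) => ℝ) j).symm (t, y) =
      (j.insertNth 0 y : Fin (n+1) → ℝ) + t • v := by
    intro t y
    change (j.insertNth t y : Fin (n+1) → ℝ) = _
    ext i
    refine Fin.succAboveCases j ?_ (fun i => ?_) i
    · simp [hv]
    · simp [hv]
  have hGp := (hmp.integrable_comp_emb (MeasurableEquiv.measurableEmbedding _)).2 hGi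
  have hNp := (hmp.integrable_comp_emb (MeasurableEquiv.measurableEmbedding _)).2 hNi
  rw [← hmp.integral_comp' G, ← hmp.integral_comp' N]
  rw [Measure.volume_eq_prod] at hGp hNp ⊢
  simp only [Function.comp_def] at hGp hNp
  rw [integral_prod_symm _ hGp, integral_prod_symm _ hNp, ← integral_const_mul]
  refine (norm_integral_le_integral_norm _).trans ?_
  refine integral_mono hGp.integral_prod_right.norm (hNp.integral_prod_right.const_mul C) ?_
  intro y
  simp only [hins]
  set w : Fin (n+1) → ℝ := j.insertNth 0 y with hw
  have hderiv : ∀ t : ℝ, deriv (fun s : ℝ => η (w + s • v)) t = fderiv ℝ η (w + t • v) v := by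
    intro t
    have h1 : HasDerivAt (fun s : ℝ => w + s • v) v t := by
      simpa using ((hasDerivAt_id t).smul_const v).const_add w
    exact (((hη.differentiable (by norm_num)) _).hasFDerivAt.comp_hasDerivAt t h1).deriv
  have hline : ContDiff ℝ (k : ℕ∞) (fun s : ℝ => w + s • v) := by fun_prop
  have hline1 : ContDiff ℝ 1 (fun s : ℝ => w + s • v) := by fun_prop
  have hsη : ∀ x, η x ≠ 0 → x ∈ Metric.ball c r := fun x hx => hsupp (subset_tsupport η hx)
  have hwj : ∀ t : ℝ, (w + t • v) j = t := by intro t; simp [hw, hv]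
  have hwi : ∀ (t : ℝ) i, (w + t • v) (j.succAbove i) = y i := by intro t i; simp [hw, hv]
  have hball : ∀ t : ℝ, w + t • v ∈ Metric.ball c r ↔
      t ∈ Set.Ioo (c j - r) (c j + r) ∧ ∀ i, dist (y i) (c (j.succAbove i)) < r := by
    intro t
    rw [Metric.mem_ball, dist_pi_lt_iff hr, Fin.forall_iff_succAbove j, hwj]
    simp only [hwi]
    rw [← Metric.mem_ball, Real.ball_eq_Ioo]
  simp only [hG, hN, ← hderiv]
  by_cases hy : ∀ i, dist (y i) (c (j.succAbove i)) < r
  · refine vdc_amp k hk (fun s : ℝ => φ (w + s • v)) (c j - r) (c j + r) α (hφ.comp hline)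
      (by linarith) hα ?_ (fun s : ℝ => η (w + s • v)) (hη.comp hline1) ?_
    · intro x hx
      rw [vdc_iter k φ hφ]
      exact hlow _ ((hball x).2 ⟨hx, hy⟩)
    · intro x hx
      exact ((hball x).1 (hsη _ hx)).1
  · have hz : ∀ t : ℝ, η (w + t • v) = 0 := by
      intro t
      by_contra h0
      exact hy ((hball t).1 (hsη _ h0)).2
    simp [hz]
end

section
/- (Uniform dispersive estimate, d ≥ 2) Let d ≥ 2, ω > 0, λ_j > 0, γ(k) = sqrt(ω² + 4∑_j λ_j sin²(k_j/2)), and φ_{t,x}(k) = k·x − 2tγ(k) for t ∈ ℝ, x ∈ ℤ^d. For every η ∈ C¹(𝕋^d) there is a constant C, independent of t and x, such that |∫_{𝕋^d} e^{iφ_{t,x}(k)} η(k) dk| ≤ C |t|^{−1/2} ( ‖∇η‖_{L¹} + ‖η‖_{L¹} ) for all |t| ≥ 1. -/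
open MeasureTheory Real

def PerD {d : ℕ} {E : Type*} (g : (Fin d → ℝ) → E) : Prop :=
  ∀ (k : Fin d → ℝ) (j : Fin d), g (k + Pi.single j (2 * π)) = g k

def boxD (d : ℕ) : Set (Fin d → ℝ) := Set.Icc (fun _ => -π) (fun _ => π)

noncomputable def dirD {d : ℕ} {E : Type*} [NormedAddCommGroup E] [NormedSpace ℝ E]
    (v : Fin d → ℝ) (g : (Fin d → ℝ) → E) : (Fin d → ℝ) → E := fun k => fderiv ℝ g k v

lemma PerD.dirD {d : ℕ} {E : Type*} [NormedAddCommGroup E] [NormedSpace ℝ E]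
    {g : (Fin d → ℝ) → E} (hg : PerD g) (v : Fin d → ℝ) : PerD (dirD v g) := by
  intro k j
  have h : (fun y => g (y + Pi.single j (2 * π))) = g := funext fun y => hg y j
  have h2 := fderiv_comp_add_right (𝕜 := ℝ) (f := g) (x := k) (Pi.single j (2 * π))
  rw [h] at h2
  simp only [_root_.dirD, h2]

lemma integral_dirD {d : ℕ} {E : Type*} [NormedAddCommGroup E] [NormedSpace ℝ E] [CompleteSpace E]
    {F : (Fin d → ℝ) → E} (hF : ContDiff ℝ 1 F) (hp : PerD F) (v : Fin d → ℝ) :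
    ∫ k in boxD d, dirD v F k = 0 := by
  rcases d with _ | n
  · have : v = 0 := Subsingleton.elim _ _
    simp only [dirD, this, map_zero, integral_zero]
  · have hsum : ∀ k, dirD v F k = ∑ i, (v i • fderiv ℝ F k) (Pi.single i 1) := by
      intro k
      simp only [dirD]
      conv_lhs => rw [pi_eq_sum_univ' v]
      simp [map_sum]
    have hc : Continuous (dirD v F) := (hF.continuous_fderiv (by simp)).clm_apply continuous_const
    have := integral_divergence_of_hasFDerivAt_off_countable' (n := n) (E := E)
      (fun _ => -π) (fun _ => π) (by intro i; simp; linarith [pi_pos])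
      (fun i k => v i • F k) (fun i k => v i • fderiv ℝ F k) ∅ (by simp)
      (fun i => (continuous_const.smul hF.continuous).continuousOn)
      (fun x _ i => ((hF.differentiable (by simp) x).hasFDerivAt.const_smul (v i)))
      (by
        simp only [← hsum]
        exact hc.continuousOn.integrableOn_compact isCompact_Icc)
    simp only [← hsum] at this
    rw [boxD, this]
    apply Finset.sum_eq_zero
    intro i _
    rw [sub_eq_zero]
    congr 1
    ext y
    congr 1
    rw [← hp (i.insertNth (-π) y) i]
    congr 1
    ext j
    refine Fin.succAboveCases i ?_ (fun j => ?_) j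
    · simp; ring
    · simp [Fin.succAbove_ne]

lemma hasDerivAt_line {d : ℕ} {E : Type*} [NormedAddCommGroup E] [NormedSpace ℝ E]
    {F : (Fin d → ℝ) → E} (hF : ContDiff ℝ 1 F) (k v : Fin d → ℝ) :
    HasDerivAt (fun s : ℝ => F (k + s • v)) (dirD v F k) 0 :=
  (hF.differentiable (by simp) k).hasFDerivAt.hasLineDerivAt v

lemma dirD_eq {d : ℕ} {E : Type*} [NormedAddCommGroup E] [NormedSpace ℝ E]
    {F : (Fin d → ℝ) → E} (hF : ContDiff ℝ 1 F) {k v : Fin d → ℝ} {y : E}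
    (h : HasDerivAt (fun s : ℝ => F (k + s • v)) y 0) : dirD v F k = y :=
  (hasDerivAt_line hF k v).unique h

lemma continuous_dirD {d : ℕ} {E : Type*} [NormedAddCommGroup E] [NormedSpace ℝ E]
    {F : (Fin d → ℝ) → E} (hF : ContDiff ℝ 1 F) (v : Fin d → ℝ) : Continuous (dirD v F) :=
  (hF.continuous_fderiv (by simp)).clm_apply continuous_const

lemma intOn {d : ℕ} {E : Type*} [NormedAddCommGroup E]
    {F : (Fin d → ℝ) → E} (hF : Continuous F) : IntegrableOn F (boxD d) :=
  hF.continuousOn.integrableOn_compact isCompact_Icc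

lemma osc_aux {d : ℕ} {f p : (Fin d → ℝ) → ℝ} (hf : ContDiff ℝ 1 f) (hp : ContDiff ℝ 1 p)
    (hfp : PerD f) (hpp : PerD p) (v : Fin d → ℝ) (hD : ∀ k, dirD v p k = f k)
    {T L : ℝ} (hT : 0 < T) (hL : ∀ k ∈ boxD d, |dirD v f k| ≤ L) :
    ∫ k in boxD d, f k ^ 2 / (1 + T * p k ^ 2) ≤
      (π / 2 * L * volume.real (boxD d)) / √T := by
  have hs : 0 < √T := Real.sqrt_pos.2 hT
  have hsq : √T ^ 2 = T := Real.sq_sqrt hT.le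
  have hpos : ∀ k, 0 < 1 + T * p k ^ 2 := fun k => by positivity
  set F : (Fin d → ℝ) → ℝ := fun k => f k * arctan (√T * p k) with hFdef
  have hF : ContDiff ℝ 1 F := hf.mul (contDiff_const.mul hp).arctan
  have hFp : PerD F := fun k j => by simp only [hFdef, hfp k j, hpp k j]
  have hDF : ∀ k, dirD v F k = dirD v f k * arctan (√T * p k) +
      √T * (f k ^ 2 / (1 + T * p k ^ 2)) := by
    intro k
    have h1 := hasDerivAt_line hf k v
    have h2 := hasDerivAt_line hp k v
    have h3 := h1.mul ((h2.const_mul (√T)).arctan)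
    have := dirD_eq hF h3
    rw [this, hD]
    simp only [zero_smul, add_zero, mul_pow, hsq]
    have := (hpos k).ne'
    field_simp
  have h0 := integral_dirD hF hFp v
  have hc2 : Continuous fun k => f k ^ 2 / (1 + T * p k ^ 2) :=
    (hf.continuous.pow 2).div (by have := hp.continuous; fun_prop) fun k => (hpos k).ne'
  have hc1 : Continuous fun k => dirD v f k * arctan (√T * p k) :=
    (continuous_dirD hf v).mul (Real.continuous_arctan.comp (continuous_const.mul hp.continuous))
  simp only [hDF] at h0
  rw [integral_add (intOn hc1) ((intOn hc2).const_mul _), integral_const_mul] at h0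
  have hb : ‖∫ k in boxD d, dirD v f k * arctan (√T * p k)‖ ≤ (π / 2 * L) * volume.real (boxD d) := by
    apply norm_setIntegral_le_of_norm_le_const
    · exact isCompact_Icc.measure_lt_top
    · intro k hk
      rw [norm_mul, mul_comm]
      apply mul_le_mul _ (hL k hk) (abs_nonneg _) (by positivity)
      rw [Real.norm_eq_abs, abs_le]
      exact ⟨(neg_pi_div_two_lt_arctan _).le, (arctan_lt_pi_div_two _).le⟩
  rw [le_div_iff₀ hs]
  have := (abs_le.1 hb).1
  linarith

lemma osc {d : ℕ} {f p : (Fin d → ℝ) → ℝ} (hf : ContDiff ℝ 1 f) (hp : ContDiff ℝ 1 p)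
    (hfp : PerD f) (hpp : PerD p) (v : Fin d → ℝ) (hD : ∀ k, dirD v p k = f k)
    {e g : (Fin d → ℝ) → ℂ} (he : ContDiff ℝ 1 e) (hg : ContDiff ℝ 1 g)
    (hep : PerD e) (hgp : PerD g) {t : ℝ} (ht : 1 ≤ |t|) (hen : ∀ k, ‖e k‖ = 1)
    (hDe : ∀ k, dirD v e k = -2 * t * p k * Complex.I * e k)
    {A B K L : ℝ} (hA : ∀ k ∈ boxD d, ‖g k‖ ≤ A * f k ^ 2) (hB : ∀ k ∈ boxD d, |f k| ≤ B)
    (hA0 : 0 ≤ A) (hB0 : 0 ≤ B)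
    (hK : ∀ k ∈ boxD d, ‖dirD v g k‖ ≤ K) (hL : ∀ k ∈ boxD d, |dirD v f k| ≤ L) :
    ‖∫ k in boxD d, e k * g k‖ ≤
      ((A + A * B / 2) * (π / 2 * L * volume.real (boxD d)) + K / 4 * volume.real (boxD d))
        / √|t| := by
  have hT : 0 < |t| := by linarith
  have ht0 : t ≠ 0 := abs_pos.1 hT
  have haux := osc_aux hf hp hfp hpp v hD hT hL
  set T := |t| with hTdef
  have hs : 0 < √T := Real.sqrt_pos.2 hT
  have hsq : √T ^ 2 = T := Real.sq_sqrt hT.le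
  have hpos : ∀ k, 0 < 1 + T * p k ^ 2 := fun k => by positivity
  set q : (Fin d → ℝ) → ℝ := fun k => p k / (1 + T * p k ^ 2) with hqdef
  have hq : ContDiff ℝ 1 q :=
    hp.div (contDiff_const.add (contDiff_const.mul (hp.pow 2))) fun k => (hpos k).ne'
  set F : (Fin d → ℝ) → ℂ := fun k => e k * ((q k : ℂ) * g k) with hFdef
  have hF : ContDiff ℝ 1 F := he.mul ((Complex.ofRealCLM.contDiff.comp hq).mul hg)
  have hFp : PerD F := fun k j => by simp only [hFdef, hqdef, hep k j, hgp k j, hpp k j]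
  have hDF : ∀ k, dirD v F k = -2 * t * p k * Complex.I * e k * (q k * g k) +
      e k * (((f k * (1 - T * p k ^ 2) / (1 + T * p k ^ 2) ^ 2 : ℝ) : ℂ) * g k
        + q k * dirD v g k) := by
    intro k
    have h1 := hasDerivAt_line he k v
    have h2 := hasDerivAt_line hp k v
    have h3 := hasDerivAt_line hg k v
    have h4 : HasDerivAt (fun s : ℝ => q (k + s • v))
        (f k * (1 - T * p k ^ 2) / (1 + T * p k ^ 2) ^ 2) 0 := by
      have h5 := h2.div (((h2.pow 2).const_mul T).const_add 1) (by
        simpa using (hpos k).ne')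
      refine HasDerivAt.congr_deriv (f := fun s : ℝ => q (k + s • v)) h5 ?_
      simp only [zero_smul, add_zero, hD, Pi.pow_apply]
      congr 1
      push_cast
      ring
    have := dirD_eq hF (h1.mul (h4.ofReal_comp.mul h3))
    rw [this, hDe]
    simp only [zero_smul, add_zero]
  have h0 := integral_dirD hF hFp v
  set c : ℂ := T / (-2 * t * Complex.I) with hc
  have hcn : ‖c‖ = 1 / 2 := by
    simp only [hc, norm_div, norm_mul, norm_neg, Complex.norm_I, Complex.norm_real, hTdef,
      Complex.norm_ofNat, Real.norm_eq_abs, abs_abs]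
    field_simp
  have hceg : Continuous fun k => e k * g k := he.continuous.mul hg.continuous
  have hcF := continuous_dirD hF v
  have hc2 : Continuous fun k => f k ^ 2 / (1 + T * p k ^ 2) :=
    (hf.continuous.pow 2).div (by have := hp.continuous; fun_prop) fun k => (hpos k).ne'
  have hI : ∫ k in boxD d, e k * g k = ∫ k in boxD d, (e k * g k - c * dirD v F k) := by
    rw [integral_sub (intOn hceg) ((intOn hcF).const_mul c), integral_const_mul, h0]
    simp
  have hpt : ∀ k, e k * g k - c * dirD v F k =
      e k * ((((1 + T * p k ^ 2)⁻¹ : ℝ) : ℂ) * g k) -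
      c * (e k * (((f k * (1 - T * p k ^ 2) / (1 + T * p k ^ 2) ^ 2 : ℝ) : ℂ) * g k
        + q k * dirD v g k)) := by
    intro k
    rw [hDF]
    have h1 : c * (-2 * t * p k * Complex.I * e k * (q k * g k)) =
        e k * (((T * p k ^ 2 / (1 + T * p k ^ 2) : ℝ) : ℂ) * g k) := by
      have : (t : ℂ) ≠ 0 := by exact_mod_cast ht0
      simp only [hc, hqdef]
      push_cast
      have hz : (1 + (T : ℂ) * (p k : ℂ) ^ 2) ≠ 0 := by exact_mod_cast (hpos k).ne'
      field_simp
    have h2 : e k * g k = e k * ((((1 + T * p k ^ 2)⁻¹ : ℝ) : ℂ) * g k) +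
        e k * (((T * p k ^ 2 / (1 + T * p k ^ 2) : ℝ) : ℂ) * g k) := by
      rw [← mul_add, ← add_mul, ← Complex.ofReal_add]
      have : (1 + T * p k ^ 2)⁻¹ + T * p k ^ 2 / (1 + T * p k ^ 2) = 1 := by
        have := (hpos k).ne'
        field_simp
      rw [this]; simp
    rw [mul_add, h1]
    linear_combination h2
  have hbd : ∀ k ∈ boxD d, ‖e k * g k - c * dirD v F k‖ ≤
      (A + A * B / 2) * (f k ^ 2 / (1 + T * p k ^ 2)) + K / 4 / √T := by
    intro k hk
    rw [hpt]
    have hP := hpos k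
    have hq2 : |q k| ≤ 1 / (2 * √T) := by
      simp only [hqdef, abs_div, abs_of_pos hP]
      rw [div_le_div_iff₀ hP (by positivity)]
      have := sq_nonneg (√T * |p k| - 1)
      have h3 : (√T * |p k|) ^ 2 = T * p k ^ 2 := by rw [mul_pow, hsq, sq_abs]
      nlinarith
    have hr : |f k * (1 - T * p k ^ 2) / (1 + T * p k ^ 2) ^ 2| ≤ B * (1 + T * p k ^ 2)⁻¹ := by
      have h1 : |1 - T * p k ^ 2| ≤ 1 + T * p k ^ 2 := by
        have : 0 ≤ T * p k ^ 2 := by positivity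
        rw [abs_le]; constructor <;> linarith
      rw [abs_div, abs_mul, abs_of_pos (pow_pos hP 2), div_le_iff₀ (by positivity)]
      have : B * (1 + T * p k ^ 2)⁻¹ * (1 + T * p k ^ 2) ^ 2 = B * (1 + T * p k ^ 2) := by
        field_simp
      rw [this]
      exact mul_le_mul (hB k hk) h1 (abs_nonneg _) hB0
    have hK0 := (norm_nonneg _).trans (hK k hk)
    calc _ ≤ ‖e k * ((((1 + T * p k ^ 2)⁻¹ : ℝ) : ℂ) * g k)‖ +
          ‖c * (e k * (((f k * (1 - T * p k ^ 2) / (1 + T * p k ^ 2) ^ 2 : ℝ) : ℂ) * g k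
            + q k * dirD v g k))‖ := norm_sub_le _ _
      _ ≤ (1 + T * p k ^ 2)⁻¹ * (A * f k ^ 2) + 1 / 2 * (B * (1 + T * p k ^ 2)⁻¹ * (A * f k ^ 2)
          + 1 / (2 * √T) * K) := by
        rw [norm_mul, norm_mul, norm_mul, norm_mul, hen, hcn, one_mul, one_mul,
          Complex.norm_real, Real.norm_eq_abs, abs_of_pos (inv_pos.2 hP)]
        have h1 := hA k hk
        gcongr
        refine (norm_add_le _ _).trans ?_
        rw [norm_mul, norm_mul, Complex.norm_real, Complex.norm_real, Real.norm_eq_abs,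
          Real.norm_eq_abs]
        have h2 := hK k hk
        gcongr
      _ = _ := by
        field_simp
        ring
  rw [hI]
  refine (norm_integral_le_integral_norm _).trans ?_
  refine (setIntegral_mono_on (intOn (hceg.sub (continuous_const.mul hcF)).norm)
    (intOn ((continuous_const.mul hc2).add continuous_const)) measurableSet_Icc hbd).trans ?_
  change ∫ k in boxD d, ((A + A * B / 2) * (f k ^ 2 / (1 + T * p k ^ 2)) + K / 4 / √T) ≤ _
  rw [integral_add ((intOn hc2).const_mul _) (intOn continuous_const), integral_const_mul,
    setIntegral_const, smul_eq_mul]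
  have := mul_le_mul_of_nonneg_left haux (by positivity : 0 ≤ A + A * B / 2)
  calc _ ≤ _ := add_le_add this le_rfl
    _ = _ := by ring

lemma exists_bd {d : ℕ} {E : Type*} [NormedAddCommGroup E]
    {F : (Fin d → ℝ) → E} (hF : Continuous F) : ∃ C, 0 ≤ C ∧ ∀ k ∈ boxD d, ‖F k‖ ≤ C := by
  obtain ⟨C, hC⟩ := (isCompact_Icc : IsCompact (boxD d)).exists_bound_of_continuousOn
    hF.continuousOn
  exact ⟨max C 0, le_max_right _ _, fun k hk => (hC k hk).trans (le_max_left _ _)⟩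

lemma contDiff_dirD {d : ℕ} {E : Type*} [NormedAddCommGroup E] [NormedSpace ℝ E]
    {F : (Fin d → ℝ) → E} {m n : WithTop ℕ∞} (hF : ContDiff ℝ n F) (hmn : m + 1 ≤ n)
    (v : Fin d → ℝ) : ContDiff ℝ m (dirD v F) :=
  (hF.fderiv_right hmn).clm_apply contDiff_const

noncomputable def wave {d : ℕ} (γ : (Fin d → ℝ) → ℝ) (t : ℝ) (x : Fin d → ℤ)
    (k : Fin d → ℝ) : ℂ :=
  Complex.exp (Complex.I * (((∑ j, k j * (x j : ℝ)) - 2 * t * γ k : ℝ) : ℂ))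

lemma wave_norm {d : ℕ} (γ : (Fin d → ℝ) → ℝ) (t : ℝ) (x : Fin d → ℤ)
    (k : Fin d → ℝ) : ‖wave γ t x k‖ = 1 := by
  rw [wave, mul_comm, Complex.norm_exp_ofReal_mul_I]

lemma wave_contDiff {d : ℕ} {γ : (Fin d → ℝ) → ℝ} (hγ : ContDiff ℝ 1 γ) (t : ℝ)
    (x : Fin d → ℤ) : ContDiff ℝ 1 (wave γ t x) := by
  have h : ContDiff ℝ 1 fun k : Fin d → ℝ => (∑ j, k j * (x j : ℝ)) - 2 * t * γ k := by
    fun_prop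
  exact Complex.contDiff_exp.comp (contDiff_const.mul (Complex.ofRealCLM.contDiff.comp h))

lemma wave_per {d : ℕ} {γ : (Fin d → ℝ) → ℝ} (hγ : PerD γ) (t : ℝ)
    (x : Fin d → ℤ) : PerD (wave γ t x) := by
  intro k j
  unfold wave
  rw [hγ k j, Complex.exp_eq_exp_iff_exists_int]
  refine ⟨x j, ?_⟩
  have : ∑ i, (k + (Pi.single j (2 * π) : Fin d → ℝ)) i * (x i : ℝ) = (∑ i, k i * (x i : ℝ)) + 2 * π * x j := by
    simp only [Pi.add_apply, add_mul, Finset.sum_add_distrib]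
    congr 1
    rw [Finset.sum_eq_single j]
    · simp
    · intro b _ hb; simp [hb]
    · simp
  rw [this]
  push_cast
  ring

lemma wave_dirD {d : ℕ} {γ : (Fin d → ℝ) → ℝ} (hγ : ContDiff ℝ 1 γ) {t : ℝ} (ht : t ≠ 0)
    (x : Fin d → ℤ) (v k : Fin d → ℝ) : dirD v (wave γ t x) k =
      -2 * t * ((dirD v γ k - (∑ j, v j * (x j : ℝ)) / (2 * t) : ℝ) : ℂ) * Complex.I
        * wave γ t x k := by
  apply dirD_eq (wave_contDiff hγ t x)
  have h1 := hasDerivAt_line hγ k v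
  have h2 : HasDerivAt (fun s : ℝ => ∑ j, (k + s • v) j * (x j : ℝ)) (∑ j, v j * (x j : ℝ)) 0 := by
    apply HasDerivAt.fun_sum
    intro j _
    have := (((hasDerivAt_id (0 : ℝ)).mul_const (v j)).const_add (k j)).mul_const (x j : ℝ)
    simpa using this
  have h3 := ((h2.sub (h1.const_mul (2 * t))).ofReal_comp.const_mul Complex.I).cexp
  refine HasDerivAt.congr_deriv (f := fun s : ℝ => wave γ t x (k + s • v)) h3 ?_
  simp only [Pi.sub_apply, zero_smul, add_zero, wave]
  have : (t : ℂ) ≠ 0 := by exact_mod_cast ht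
  push_cast
  field_simp
  ring

lemma dir_bound {d : ℕ} {γ : (Fin d → ℝ) → ℝ} (hγ : ContDiff ℝ 3 γ) (hγp : PerD γ)
    (v : Fin d → ℝ) {ψ : (Fin d → ℝ) → ℂ} (hψ : ContDiff ℝ 1 ψ) (hψp : PerD ψ) :
    ∃ C : ℝ, ∀ (t : ℝ) (x : Fin d → ℤ), 1 ≤ |t| →
      ‖∫ k in boxD d, wave γ t x k * (((dirD v (dirD v γ) k : ℝ) : ℂ) ^ 2 * ψ k)‖
        ≤ C / √|t| := by
  have hγ1 : ContDiff ℝ 1 γ := hγ.of_le (by norm_num)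
  have hg2 : ContDiff ℝ 2 (dirD v γ) := contDiff_dirD hγ (by norm_num) v
  have hf : ContDiff ℝ 1 (dirD v (dirD v γ)) := contDiff_dirD hg2 (by norm_num) v
  have hg1 : ContDiff ℝ 1 (dirD v γ) := hg2.of_le (by norm_num)
  have hfp : PerD (dirD v (dirD v γ)) := (hγp.dirD v).dirD v
  set f := dirD v (dirD v γ) with hfdef
  set g : (Fin d → ℝ) → ℂ := fun k => ((f k : ℝ) : ℂ) ^ 2 * ψ k with hgdef
  have hg : ContDiff ℝ 1 g := ((Complex.ofRealCLM.contDiff.comp hf).pow 2).mul hψ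
  have hgp : PerD g := fun k j => by simp only [hgdef, hfp k j, hψp k j]
  obtain ⟨A, hA0, hA⟩ := exists_bd hψ.continuous
  obtain ⟨B, hB0, hB⟩ := exists_bd hf.continuous
  obtain ⟨K, hK0, hK⟩ := exists_bd (continuous_dirD hg v)
  obtain ⟨L, hL0, hL⟩ := exists_bd (continuous_dirD hf v)
  refine ⟨(A + A * B / 2) * (π / 2 * L * volume.real (boxD d)) + K / 4 * volume.real (boxD d),
    fun t x ht => ?_⟩
  have ht0 : t ≠ 0 := by rintro rfl; simp at ht; linarith
  refine osc (p := fun k => dirD v γ k - (∑ j, v j * (x j : ℝ)) / (2 * t)) (e := wave γ t x)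
    (A := A) (B := B) (K := K) (L := L) hf
    (hg1.sub contDiff_const) hfp ?_ v ?_ (wave_contDiff hγ1 t x) hg (wave_per hγp t x) hgp ht
    (wave_norm γ t x) (fun k => wave_dirD hγ1 ht0 x v k) ?_ hB hA0 hB0 hK hL
  · intro k j
    simp only [hγp.dirD v k j]
  · intro k
    exact dirD_eq (hg1.sub contDiff_const) ((hasDerivAt_line hg1 k v).sub_const _)
  · intro k hk
    simp only [hgdef, norm_mul, norm_pow, Complex.norm_real, Real.norm_eq_abs, sq_abs]
    rw [mul_comm]
    exact mul_le_mul_of_nonneg_right (hA k hk) (sq_nonneg _)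

section gam
variable {d : ℕ} {ω : ℝ} {lam : Fin d → ℝ} {γ : (Fin d → ℝ) → ℝ}

lemma gam_pos (hω : 0 < ω) (hlam : ∀ j, 0 < lam j) (k : Fin d → ℝ) :
    0 < ω ^ 2 + 4 * ∑ j, lam j * Real.sin (k j / 2) ^ 2 := by
  have : 0 ≤ ∑ j, lam j * Real.sin (k j / 2) ^ 2 :=
    Finset.sum_nonneg fun j _ => mul_nonneg (hlam j).le (sq_nonneg _)
  positivity

lemma gam_contDiff (hω : 0 < ω) (hlam : ∀ j, 0 < lam j)
    (hγ : ∀ k, γ k = Real.sqrt (ω ^ 2 + 4 * ∑ j, lam j * Real.sin (k j / 2) ^ 2)) :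
    ContDiff ℝ 3 γ := by
  rw [funext hγ]
  apply ContDiff.sqrt
  · have : ∀ j : Fin d, ContDiff ℝ 3 fun k : Fin d → ℝ => Real.sin (k j / 2) := fun j =>
      Real.contDiff_sin.comp ((contDiff_apply ℝ ℝ j).div_const 2)
    fun_prop
  · exact fun k => (gam_pos hω hlam k).ne'

lemma gam_per
    (hγ : ∀ k, γ k = Real.sqrt (ω ^ 2 + 4 * ∑ j, lam j * Real.sin (k j / 2) ^ 2)) :
    PerD γ := by
  intro k j
  rw [hγ, hγ]
  congr 3
  apply Finset.sum_congr rfl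
  intro i _
  by_cases h : i = j
  · subst h
    have : (k + (Pi.single i (2 * π) : Fin d → ℝ)) i / 2 = k i / 2 + π := by simp; ring
    rw [this, Real.sin_add_pi, neg_sq]
  · simp [h]

lemma gam_first (hω : 0 < ω) (hlam : ∀ j, 0 < lam j)
    (hγ : ∀ k, γ k = Real.sqrt (ω ^ 2 + 4 * ∑ j, lam j * Real.sin (k j / 2) ^ 2))
    (i : Fin d) (k : Fin d → ℝ) :
    γ k * dirD (Pi.single i 1) γ k = lam i * Real.sin (k i) := by
  have hc : ContDiff ℝ 1 γ := (gam_contDiff hω hlam hγ).of_le (by norm_num)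
  have h1 := (hasDerivAt_line hc k (Pi.single i 1)).pow 2
  have h2 : HasDerivAt (fun s : ℝ => ω ^ 2 + 4 * ∑ j, lam j *
      Real.sin ((k + s • (Pi.single i 1 : Fin d → ℝ)) j / 2) ^ 2)
      (4 * ∑ j, lam j * (2 * Real.sin (k j / 2) *
        (Real.cos (k j / 2) * ((Pi.single i 1 : Fin d → ℝ) j / 2)))) 0 := by
    apply HasDerivAt.const_add
    apply HasDerivAt.const_mul
    apply HasDerivAt.fun_sum
    intro j _
    apply HasDerivAt.const_mul
    have := ((((hasDerivAt_id (0 : ℝ)).mul_const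
      ((Pi.single i 1 : Fin d → ℝ) j)).const_add (k j)).div_const 2).sin.pow 2
    refine HasDerivAt.congr_deriv (f := fun s : ℝ =>
      Real.sin ((k + s • (Pi.single i 1 : Fin d → ℝ)) j / 2) ^ 2) this ?_
    simp
  have h3 : (fun s : ℝ => γ (k + s • (Pi.single i 1 : Fin d → ℝ))) ^ 2 = (fun s : ℝ => ω ^ 2 + 4 *
      ∑ j, lam j * Real.sin ((k + s • (Pi.single i 1 : Fin d → ℝ)) j / 2) ^ 2) := by
    funext s
    simp only [Pi.pow_apply]
    rw [hγ, Real.sq_sqrt (gam_pos hω hlam _).le]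
  rw [h3] at h1
  have h4 := h1.unique h2
  rw [Finset.sum_eq_single i (by intro b _ hb; simp [hb]) (by simp)] at h4
  have h5 := Real.sin_two_mul (k i / 2)
  rw [mul_div_cancel₀ _ (two_ne_zero)] at h5
  simp at h4
  rw [h5]
  linarith

lemma gam_second (hω : 0 < ω) (hlam : ∀ j, 0 < lam j)
    (hγ : ∀ k, γ k = Real.sqrt (ω ^ 2 + 4 * ∑ j, lam j * Real.sin (k j / 2) ^ 2))
    (i j : Fin d) (k : Fin d → ℝ) :
    dirD (Pi.single j 1) γ k * dirD (Pi.single i 1) γ k +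
      γ k * dirD (Pi.single j 1) (dirD (Pi.single i 1) γ) k =
      lam i * Real.cos (k i) * (Pi.single j 1 : Fin d → ℝ) i := by
  have hc3 := gam_contDiff hω hlam hγ
  have hc : ContDiff ℝ 1 γ := hc3.of_le (by norm_num)
  have hc2 : ContDiff ℝ 1 (dirD (Pi.single i 1) γ) := contDiff_dirD hc3 (by norm_num) _
  have h1 := (hasDerivAt_line hc k (Pi.single j 1)).mul (hasDerivAt_line hc2 k (Pi.single j 1))
  have h2 : HasDerivAt (fun s : ℝ => lam i * Real.sin ((k + s • (Pi.single j 1 : Fin d → ℝ)) i))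
      (lam i * Real.cos (k i) * (Pi.single j 1 : Fin d → ℝ) i) 0 := by
    have := (((hasDerivAt_id (0 : ℝ)).mul_const
      ((Pi.single j 1 : Fin d → ℝ) i)).const_add (k i)).sin.const_mul (lam i)
    refine HasDerivAt.congr_deriv (f := fun s : ℝ =>
      lam i * Real.sin ((k + s • (Pi.single j 1 : Fin d → ℝ)) i)) this ?_
    simp [mul_assoc]
  have h3 : ((fun s : ℝ => γ (k + s • (Pi.single j 1 : Fin d → ℝ))) *
      fun s : ℝ => dirD (Pi.single i 1) γ (k + s • (Pi.single j 1 : Fin d → ℝ))) =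
      fun s : ℝ => lam i * Real.sin ((k + s • (Pi.single j 1 : Fin d → ℝ)) i) := by
    funext s
    exact gam_first hω hlam hγ i _
  rw [h3] at h1
  have h4 := h1.unique h2
  simpa using h4

lemma gam_nondeg (hω : 0 < ω) (hlam : ∀ j, 0 < lam j)
    (hγ : ∀ k, γ k = Real.sqrt (ω ^ 2 + 4 * ∑ j, lam j * Real.sin (k j / 2) ^ 2))
    (i j : Fin d) (hij : i ≠ j) (k : Fin d → ℝ) :
    0 < dirD (Pi.single i 1) (dirD (Pi.single i 1) γ) k ^ 2 +
      dirD (Pi.single j 1) (dirD (Pi.single j 1) γ) k ^ 2 +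
      dirD (Pi.single i 1 + Pi.single j 1) (dirD (Pi.single i 1 + Pi.single j 1) γ) k ^ 2 := by
  have hc3 := gam_contDiff hω hlam hγ
  have hci : ContDiff ℝ 1 (dirD (Pi.single i 1) γ) := contDiff_dirD hc3 (by norm_num) _
  have hcj : ContDiff ℝ 1 (dirD (Pi.single j 1) γ) := contDiff_dirD hc3 (by norm_num) _
  have hadd : dirD (Pi.single i 1 + Pi.single j 1) (dirD (Pi.single i 1 + Pi.single j 1) γ) k =
      dirD (Pi.single i 1) (dirD (Pi.single i 1) γ) k +
      dirD (Pi.single j 1) (dirD (Pi.single j 1) γ) k +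
      dirD (Pi.single i 1) (dirD (Pi.single j 1) γ) k +
      dirD (Pi.single j 1) (dirD (Pi.single i 1) γ) k := by
    have h1 : dirD (Pi.single i 1 + Pi.single j 1) γ =
        dirD (Pi.single i 1) γ + dirD (Pi.single j 1) γ := by
      funext y; simp [dirD]
    rw [h1]
    have h2 : ∀ v, dirD v (dirD (Pi.single i 1) γ + dirD (Pi.single j 1) γ) k =
        dirD v (dirD (Pi.single i 1) γ) k + dirD v (dirD (Pi.single j 1) γ) k := fun v =>
      dirD_eq (hci.add hcj) ((hasDerivAt_line hci k v).add (hasDerivAt_line hcj k v))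
    have h3 : ∀ g : (Fin d → ℝ) → ℝ, dirD (Pi.single i 1 + Pi.single j 1) g k =
        dirD (Pi.single i 1) g k + dirD (Pi.single j 1) g k := fun g => by simp [dirD]
    rw [h3, h2, h2]
    ring
  by_contra hneg
  have hii := gam_second hω hlam hγ i i k
  have hjj := gam_second hω hlam hγ j j k
  have hij1 := gam_second hω hlam hγ i j k
  have hji1 := gam_second hω hlam hγ j i k
  have hi := gam_first hω hlam hγ i k
  have hj := gam_first hω hlam hγ j k
  simp only [Pi.single_eq_same, Pi.single_eq_of_ne hij, Pi.single_eq_of_ne hij.symm, mul_one,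
    mul_zero] at hii hjj hij1 hji1
  have e1 : dirD (Pi.single i 1) (dirD (Pi.single i 1) γ) k = 0 := by
    apply pow_eq_zero_iff (two_ne_zero) |>.1; nlinarith
  have e2 : dirD (Pi.single j 1) (dirD (Pi.single j 1) γ) k = 0 := by
    apply pow_eq_zero_iff (two_ne_zero) |>.1; nlinarith
  have e3 : dirD (Pi.single i 1 + Pi.single j 1) (dirD (Pi.single i 1 + Pi.single j 1) γ) k = 0 := by
    apply pow_eq_zero_iff (two_ne_zero) |>.1; nlinarith
  rw [e3, e1, e2] at hadd
  rw [e1] at hii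
  rw [e2] at hjj
  have hprod : dirD (Pi.single i 1) γ k * dirD (Pi.single j 1) γ k = 0 := by
    linear_combination (1 / 2) * hij1 + (1 / 2) * hji1 + (1 / 2) * γ k * hadd
  have key : ∀ l : Fin d, dirD (Pi.single l 1) γ k = 0 →
      γ k * dirD (Pi.single l 1) γ k = lam l * Real.sin (k l) →
      dirD (Pi.single l 1) γ k * dirD (Pi.single l 1) γ k + γ k * 0 = lam l * Real.cos (k l) →
      False := by
    intro l h0 h1 h2
    rw [h0] at h1 h2
    have hl := (hlam l).ne'
    have hs : Real.sin (k l) = 0 := by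
      have : lam l * Real.sin (k l) = 0 := by linarith
      simpa [hl] using this
    have hcs : Real.cos (k l) = 0 := by
      have : lam l * Real.cos (k l) = 0 := by linarith
      simpa [hl] using this
    have := Real.sin_sq_add_cos_sq (k l)
    rw [hs, hcs] at this
    norm_num at this
  rcases mul_eq_zero.1 hprod with h | h
  · exact key i h hi hii
  · exact key j h hj hjj

end gam

lemma main_bound {d : ℕ} {γ : (Fin d → ℝ) → ℝ} (hγ : ContDiff ℝ 3 γ) (hγp : PerD γ)
    (u v w : Fin d → ℝ)
    (hQ : ∀ k, 0 < dirD u (dirD u γ) k ^ 2 + dirD v (dirD v γ) k ^ 2 + dirD w (dirD w γ) k ^ 2)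
    {η : (Fin d → ℝ) → ℂ} (hη : ContDiff ℝ 1 η) (hηp : PerD η) :
    ∃ C : ℝ, ∀ (t : ℝ) (x : Fin d → ℤ), 1 ≤ |t| →
      ‖∫ k in boxD d, wave γ t x k * η k‖ ≤ C / √|t| := by
  have hγ1 : ContDiff ℝ 1 γ := hγ.of_le (by norm_num)
  have hf : ∀ v, ContDiff ℝ 1 (dirD v (dirD v γ)) := fun v =>
    contDiff_dirD (contDiff_dirD (m := 2) hγ (by norm_num) v) (by norm_num) v
  have hfp : ∀ v, PerD (dirD v (dirD v γ)) := fun v => (hγp.dirD v).dirD v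
  set Q : (Fin d → ℝ) → ℝ := fun k =>
    dirD u (dirD u γ) k ^ 2 + dirD v (dirD v γ) k ^ 2 + dirD w (dirD w γ) k ^ 2 with hQdef
  have hQc : ContDiff ℝ 1 Q := (((hf u).pow 2).add ((hf v).pow 2)).add ((hf w).pow 2)
  set ψ : (Fin d → ℝ) → ℂ := fun k => (((Q k)⁻¹ : ℝ) : ℂ) * η k with hψdef
  have hψ : ContDiff ℝ 1 ψ :=
    (Complex.ofRealCLM.contDiff.comp (hQc.inv fun k => (hQ k).ne')).mul hη
  have hψp : PerD ψ := fun k j => by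
    simp only [hψdef, hQdef, hfp u k j, hfp v k j, hfp w k j, hηp k j]
  obtain ⟨C1, h1⟩ := dir_bound hγ hγp u hψ hψp
  obtain ⟨C2, h2⟩ := dir_bound hγ hγp v hψ hψp
  obtain ⟨C3, h3⟩ := dir_bound hγ hγp w hψ hψp
  refine ⟨C1 + C2 + C3, fun t x ht => ?_⟩
  have hint : ∀ v, IntegrableOn
      (fun k => wave γ t x k * (((dirD v (dirD v γ) k : ℝ) : ℂ) ^ 2 * ψ k)) (boxD d) := fun v =>
    intOn ((wave_contDiff hγ1 t x).continuous.mul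
      (((Complex.continuous_ofReal.comp (hf v).continuous).pow 2).mul hψ.continuous))
  have hsplit : ∀ k, wave γ t x k * η k =
      wave γ t x k * (((dirD u (dirD u γ) k : ℝ) : ℂ) ^ 2 * ψ k) +
      wave γ t x k * (((dirD v (dirD v γ) k : ℝ) : ℂ) ^ 2 * ψ k) +
      wave γ t x k * (((dirD w (dirD w γ) k : ℝ) : ℂ) ^ 2 * ψ k) := by
    intro k
    have hq : (Q k : ℂ) * (((Q k)⁻¹ : ℝ) : ℂ) = 1 := by
      rw [← Complex.ofReal_mul, mul_inv_cancel₀ (hQ k).ne', Complex.ofReal_one]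
    have hq2 : (Q k : ℂ) = ((dirD u (dirD u γ) k : ℝ) : ℂ) ^ 2 +
      ((dirD v (dirD v γ) k : ℝ) : ℂ) ^ 2 + ((dirD w (dirD w γ) k : ℝ) : ℂ) ^ 2 := by
      simp only [hQdef]; push_cast; rfl
    simp only [hψdef]
    generalize (((Q k)⁻¹ : ℝ) : ℂ) = z at *
    rw [hq2] at hq
    linear_combination (-(wave γ t x k) * η k) * hq
  simp only [hsplit]
  have e1 := integral_add ((hint u).add (hint v)) (hint w)
  have e2 := integral_add (hint u) (hint v)
  simp only [Pi.add_apply] at e1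
  rw [e1, e2, add_div, add_div]
  exact (norm_add₃_le).trans (add_le_add (add_le_add (h1 t x ht) (h2 t x ht)) (h3 t x ht))

/-- Uniform dispersive estimate, `d ≥ 2`: with
`γ(k) = sqrt(ω² + 4∑ⱼ λⱼ sin²(kⱼ/2))` and phase `φ_{t,x}(k) = k·x − 2tγ(k)`,
for every `C¹`, `2π`-periodic amplitude `η` on the torus `(-π,π]^d` there is a
constant `C`, independent of `t` and `x ∈ ℤ^d`, such that
`|∫_{𝕋^d} e^{iφ_{t,x}} η| ≤ C |t|^{-1/2} (‖∇η‖_{L¹} + ‖η‖_{L¹})` for `|t| ≥ 1`. -/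
theorem uniform_dispersive_estimate (d : ℕ) (hd : 2 ≤ d) (ω : ℝ) (hω : 0 < ω)
    (lam : Fin d → ℝ) (hlam : ∀ j, 0 < lam j) (γ : (Fin d → ℝ) → ℝ)
    (hγ : ∀ k, γ k = Real.sqrt (ω ^ 2 + 4 * ∑ j, lam j * Real.sin (k j / 2) ^ 2))
    (η : (Fin d → ℝ) → ℂ) (hη : ContDiff ℝ 1 η)
    (hper : ∀ (k : Fin d → ℝ) (j : Fin d), η (k + Pi.single j (2 * π)) = η k) :
    ∃ C : ℝ, ∀ (t : ℝ) (x : Fin d → ℤ), 1 ≤ |t| →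
      ‖∫ k in (Set.univ.pi fun _ : Fin d => Set.Ioc (-π) π),
          Complex.exp (Complex.I *
            (((∑ j, k j * (x j : ℝ)) - 2 * t * γ k : ℝ) : ℂ)) * η k‖ ≤
        (C / Real.sqrt |t|) *
          ((∫ k in (Set.univ.pi fun _ : Fin d => Set.Ioc (-π) π),
              ∑ j, ‖fderiv ℝ η k (Pi.single j 1)‖) +
           ∫ k in (Set.univ.pi fun _ : Fin d => Set.Ioc (-π) π), ‖η k‖) := by
  have hγc := gam_contDiff hω hlam hγ
  have hγp := gam_per hγ
  have hbox : (Set.univ.pi fun _ : Fin d => Set.Ioc (-π) π) =ᵐ[volume] boxD d :=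
    Measure.univ_pi_Ioc_ae_eq_Icc
  obtain ⟨i0, i1, hne⟩ : ∃ i0 i1 : Fin d, i0 ≠ i1 :=
    ⟨⟨0, by omega⟩, ⟨1, by omega⟩, fun h => by simpa using congrArg Fin.val h⟩
  obtain ⟨C, hC⟩ := main_bound hγc hγp (Pi.single i0 1) (Pi.single i1 1)
    (Pi.single i0 1 + Pi.single i1 1) (gam_nondeg hω hlam hγ i0 i1 hne) hη hper
  rw [setIntegral_congr_set hbox, setIntegral_congr_set hbox]
  set N1 := ∫ k in boxD d, ∑ j, ‖fderiv ℝ η k (Pi.single j 1)‖ with hN1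
  set N2 := ∫ k in boxD d, ‖η k‖ with hN2
  have h1 : 0 ≤ N1 := integral_nonneg fun k => Finset.sum_nonneg fun j _ => norm_nonneg _
  have h2 : 0 ≤ N2 := integral_nonneg fun k => norm_nonneg _
  refine ⟨C / (N1 + N2), fun t x ht => ?_⟩
  rw [setIntegral_congr_set hbox]
  change ‖∫ k in boxD d, wave γ t x k * η k‖ ≤ _
  rcases (add_nonneg h1 h2).eq_or_lt with h | h
  · rw [← h, mul_zero]
    have h3 : N2 = 0 := by linarith
    rw [← h3]
    refine (norm_integral_le_integral_norm _).trans (le_of_eq ?_)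
    simp only [norm_mul, wave_norm, one_mul, hN2]
  · refine (hC t x ht).trans (le_of_eq ?_)
    field_simp
end

section
/- (Weighted dispersive estimate) Let ω > 0, λ_j > 0, γ and φ_{t,x} as above, and η ∈ C^{d+3}(𝕋^d). Then there is a constant C independent of t and x such that |∫_{𝕋^d} e^{iφ_{t,x}(k)} η(k) dk| ≤ C ( ‖η‖_∞ |t|^{−d/2} + sup_{|β| ≤ d+3} ‖∂^β η‖_∞ · (3 + ‖x‖₁)^{d+3} |t|^{−(d+1)/2} ) for all |t| ≥ 1, where ‖x‖₁ = ∑_j |x_j|. -/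
open MeasureTheory Real

namespace WDE

/-- Uniformly bounded families, with `n` uniformly bounded directional derivatives. -/
def UB {P E A : Type*} [NormedAddCommGroup E] [NormedSpace ℝ E] [NormedAddCommGroup A]
    [NormedSpace ℝ A] (v : E) : ℕ → (P → E → A) → Prop
  | 0, F => (∀ p, Continuous (F p)) ∧ ∃ C, ∀ p k, ‖F p k‖ ≤ C
  | n + 1, F => ((∀ p, Continuous (F p)) ∧ ∃ C, ∀ p k, ‖F p k‖ ≤ C) ∧
      ∃ F' : P → E → A, (∀ p k, HasLineDerivAt ℝ (F p) (F' p k) k v) ∧ UB v n F'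

section
variable {P E A : Type*} [NormedAddCommGroup E] [NormedSpace ℝ E] [NormedAddCommGroup A]
    [NormedSpace ℝ A] {v : E}

lemma UB.base {n : ℕ} {F : P → E → A} (h : UB v n F) :
    (∀ p, Continuous (F p)) ∧ ∃ C, ∀ p k, ‖F p k‖ ≤ C := by
  cases n with
  | zero => exact h
  | succ n => exact h.1

lemma UB.of_succ {n : ℕ} : ∀ {F : P → E → A}, UB v (n + 1) F → UB v n F := by
  induction n with
  | zero => intro F h; exact h.1
  | succ n ih =>
    rintro F ⟨h0, F', hF, h1⟩
    exact ⟨h0, F', hF, ih h1⟩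

lemma UB.of_le {n m : ℕ} (hnm : n ≤ m) {F : P → E → A} (h : UB v m F) : UB v n F := by
  induction m, hnm using Nat.le_induction with
  | base => exact h
  | succ m _ ih => exact ih h.of_succ

lemma UB.add {n : ℕ} : ∀ {F G : P → E → A}, UB v n F → UB v n G →
    UB v n (fun p k => F p k + G p k) := by
  have key : ∀ {n : ℕ} {F G : P → E → A}, UB v n F → UB v n G →
      UB v 0 (fun p k => F p k + G p k) := by
    intro n F G hF hG
    obtain ⟨c1, C1, h1⟩ := hF.base
    obtain ⟨c2, C2, h2⟩ := hG.base
    exact ⟨fun p => (c1 p).add (c2 p), C1 + C2, fun p k =>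
      (norm_add_le _ _).trans (add_le_add (h1 p k) (h2 p k))⟩
  induction n with
  | zero => intro F G hF hG; exact key hF hG
  | succ n ih =>
    intro F G hF hG
    refine ⟨key hF hG, ?_⟩
    obtain ⟨_, F', hF1, hF2⟩ := hF
    obtain ⟨_, G', hG1, hG2⟩ := hG
    exact ⟨_, fun p k => HasDerivAt.add (hF1 p k) (hG1 p k), ih hF2 hG2⟩

lemma UB.clm {B : Type*} [NormedAddCommGroup B] [NormedSpace ℝ B] (T : A →L[ℝ] B) {n : ℕ} :
    ∀ {F : P → E → A}, UB v n F → UB v n (fun p k => T (F p k)) := by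
  have key : ∀ {n : ℕ} {F : P → E → A}, UB v n F → UB v 0 (fun p k => T (F p k)) := by
    intro n F hF
    obtain ⟨c1, C1, h1⟩ := hF.base
    exact ⟨fun p => T.continuous.comp (c1 p), ‖T‖ * C1, fun p k =>
      (T.le_opNorm _).trans (by gcongr; exact h1 p k)⟩
  induction n with
  | zero => intro F hF; exact key hF
  | succ n ih =>
    intro F hF
    refine ⟨key hF, ?_⟩
    obtain ⟨_, F', hF1, hF2⟩ := hF
    exact ⟨_, fun p k => T.hasFDerivAt.comp_hasDerivAt _ (hF1 p k), ih hF2⟩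

end

section
variable {P E A : Type*} [NormedAddCommGroup E] [NormedSpace ℝ E] [NormedRing A]
    [NormedAlgebra ℝ A] {v : E}

lemma UB.mul {n : ℕ} : ∀ {F G : P → E → A}, UB v n F → UB v n G →
    UB v n (fun p k => F p k * G p k) := by
  have key : ∀ {n : ℕ} {F G : P → E → A}, UB v n F → UB v n G →
      UB v 0 (fun p k => F p k * G p k) := by
    intro n F G hF hG
    obtain ⟨c1, C1, h1⟩ := hF.base
    obtain ⟨c2, C2, h2⟩ := hG.base
    refine ⟨fun p => (c1 p).mul (c2 p), C1 * C2, fun p k =>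
      (norm_mul_le _ _).trans (mul_le_mul (h1 p k) (h2 p k) (norm_nonneg _)
        ((norm_nonneg _).trans (h1 p k)))⟩
  induction n with
  | zero => intro F G hF hG; exact key hF hG
  | succ n ih =>
    intro F G hF hG
    refine ⟨key hF hG, ?_⟩
    have hF0 := hF.of_succ
    have hG0 := hG.of_succ
    obtain ⟨_, F', hF1, hF2⟩ := hF
    obtain ⟨_, G', hG1, hG2⟩ := hG
    refine ⟨fun p k => F' p k * G p k + F p k * G' p k, fun p k => ?_,
      (ih hF2 hG0).add (ih hF0 hG2)⟩
    have := HasDerivAt.mul (hF1 p k) (hG1 p k)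
    simp only [zero_smul, add_zero] at this
    exact this

lemma UB.comp {n : ℕ} : ∀ {F : P → E → ℝ} {h : ℝ → ℝ}, ContDiff ℝ (⊤ : ℕ∞) h → UB v n F →
    UB v n (fun p k => h (F p k)) := by
  have key : ∀ {n : ℕ} {F : P → E → ℝ} {h : ℝ → ℝ}, ContDiff ℝ (⊤ : ℕ∞) h → UB v n F →
    UB v 0 (fun p k => h (F p k)) := by
    intro n F h hh hF
    obtain ⟨c1, C1, h1⟩ := hF.base
    obtain ⟨C, hC⟩ := (isCompact_Icc (a := -C1) (b := C1)).exists_bound_of_continuousOn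
      hh.continuous.continuousOn
    exact ⟨fun p => hh.continuous.comp (c1 p), C, fun p k => hC _ (abs_le.1 (h1 p k))⟩
  induction n with
  | zero => intro F h hh hF; exact key hh hF
  | succ n ih =>
    intro F h hh hF
    refine ⟨key hh hF, ?_⟩
    have hF0 := hF.of_succ
    obtain ⟨_, F', hF1, hF2⟩ := hF
    have hd : ContDiff ℝ (⊤ : ℕ∞) (deriv h) := (contDiff_infty_iff_deriv.1 hh).2
    refine ⟨fun p k => deriv h (F p k) * F' p k, fun p k => ?_, (ih hd hF0).mul hF2⟩
    have h1 : HasDerivAt h (deriv h (F p (k + (0:ℝ) • v))) (F p (k + (0:ℝ) • v)) :=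
      (hh.differentiable (by simp) _).hasDerivAt
    have := h1.comp (0:ℝ) (hF1 p k)
    simpa [HasLineDerivAt, Function.comp_def] using this
end

/-- smooth cut-off inverse -/
lemma exists_smooth_inv (c : ℝ) (hc : 0 < c) : ∃ h : ℝ → ℝ, ContDiff ℝ (⊤ : ℕ∞) h ∧
    ∀ s, c ≤ |s| → h s * s = 1 := by
  let f : ContDiffBump (0:ℝ) := ⟨c / 2, c, by positivity, by linarith⟩
  have hpos : ∀ s : ℝ, s ^ 2 + f s ≠ 0 := by
    intro s
    by_cases hs : s = 0
    · have : f s = 1 := f.one_of_mem_closedBall (by simp [hs, f]; positivity)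
      rw [this]; positivity
    · have := f.nonneg (x := s)
      positivity
  refine ⟨fun s => s / (s ^ 2 + f s), ?_, ?_⟩
  · exact contDiff_id.div ((contDiff_id.pow 2).add f.contDiff) hpos
  · intro s hs
    have h0 : f s = 0 := f.zero_of_le_dist (by simpa [f] using hs)
    have : s ≠ 0 := by rintro rfl; simp at hs; linarith
    simp only [h0]
    field_simp
    simp

/-- Non-stationary phase. -/
theorem nsp {P E : Type*} [NormedAddCommGroup E] [NormedSpace ℝ E] [FiniteDimensional ℝ E]
    [MeasurableSpace E] [BorelSpace E] (μ : Measure E) [μ.IsAddHaarMeasure] (v : E)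
    (N : ℕ) (ψ ψ' : P → E → ℝ) (hψ : ∀ p, Continuous (ψ p))
    (hd : ∀ p k, HasLineDerivAt ℝ (ψ p) (ψ' p k) k v) (hψ' : UB v N ψ')
    (K : Set E) (hK : IsCompact K) (c : ℝ) (hc : 0 < c) :
    ∀ n ≤ N, ∀ a : P → E → ℂ, UB v n a → (∀ p k, k ∉ K → a p k = 0) →
      (∀ p k, a p k ≠ 0 → c ≤ |ψ' p k|) →
      ∃ C, ∀ p, ∀ τ : ℝ, τ ≠ 0 →
        ‖∫ k, Complex.exp (Complex.I * ((τ * ψ p k : ℝ) : ℂ)) * a p k ∂μ‖ ≤ C * (|τ| ^ n)⁻¹ := by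
  obtain ⟨h, hh, hinv⟩ := exists_smooth_inv c hc
  have hexp : ∀ r : ℝ, ‖Complex.exp (Complex.I * (r : ℂ))‖ = 1 := by
    intro r; rw [mul_comm]; exact Complex.norm_exp_ofReal_mul_I r
  intro n
  induction n with
  | zero =>
    intro _ a ha hsupp hlow
    obtain ⟨hac, C, hC⟩ := ha
    refine ⟨C * μ.real K, fun p τ _ => ?_⟩
    have : ∫ k, Complex.exp (Complex.I * ((τ * ψ p k : ℝ) : ℂ)) * a p k ∂μ =
        ∫ k in K, Complex.exp (Complex.I * ((τ * ψ p k : ℝ) : ℂ)) * a p k ∂μ := by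
      rw [setIntegral_eq_integral_of_forall_compl_eq_zero]
      intro k hk; rw [hsupp p k hk, mul_zero]
    rw [this]
    simp only [pow_zero, inv_one, mul_one]
    refine norm_setIntegral_le_of_norm_le_const hK.measure_lt_top fun k _ => ?_
    rw [norm_mul, hexp, one_mul]; exact hC p k
  | succ n ih =>
    intro hn a ha hsupp hlow
    have hq : UB v (n+1) (fun p k => ((h (ψ' p k) : ℝ) : ℂ)) :=
      ((hψ'.of_le hn).comp hh).clm Complex.ofRealCLM
    have hb := ha.mul hq
    set b : P → E → ℂ := fun p k => a p k * ((h (ψ' p k) : ℝ) : ℂ) with hbdef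
    obtain ⟨⟨hbc, Cb, hCb⟩, b', hb1, hb2⟩ := hb
    have hbK : ∀ p k, k ∉ K → b p k = 0 := fun p k hk => by simp [hbdef, hsupp p k hk]
    have hψc := hψ'.base.1
    have hzero : ∀ p (U : Set E), IsOpen U → (∀ k ∈ U, b p k = 0) → ∀ k ∈ U, b' p k = 0 := by
      intro p U hU hbU k hk
      have h1 := hb1 p k
      have h2 : (fun t : ℝ => b p (k + t • v)) =ᶠ[nhds 0] fun _ => 0 := by
        have hcont : Continuous fun t : ℝ => k + t • v := by fun_prop
        have : (fun t : ℝ => k + t • v) ⁻¹' U ∈ nhds (0:ℝ) :=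
          (hU.preimage hcont).mem_nhds (by simpa using hk)
        filter_upwards [this] with t ht using hbU _ ht
      have h3 : HasDerivAt (fun t : ℝ => b p (k + t • v)) 0 0 :=
        (hasDerivAt_const (0:ℝ) (0:ℂ)).congr_of_eventuallyEq h2
      exact HasDerivAt.unique h1 h3
    have hb'K : ∀ p k, k ∉ K → b' p k = 0 := fun p k hk =>
      hzero p Kᶜ hK.isClosed.isOpen_compl (fun k hk => hbK p k hk) k hk
    have hb'low : ∀ p k, b' p k ≠ 0 → c ≤ |ψ' p k| := by
      intro p k hk
      by_contra hlt
      push Not at hlt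
      refine hk (hzero p {k | |ψ' p k| < c} (isOpen_lt (hψc p).abs continuous_const) ?_ k hlt)
      intro k' hk'
      by_contra hne
      have : a p k' ≠ 0 := by
        intro h0; apply hne; simp [hbdef, h0]
      exact absurd (hlow p k' this) (not_le.2 hk')
    obtain ⟨C, hC⟩ := ih (by omega) b' hb2 hb'K hb'low
    refine ⟨C, fun p τ hτ => ?_⟩
    have hb'c := hb2.base.1
    set e : E → ℂ := fun k => Complex.exp (Complex.I * ((τ * ψ p k : ℝ) : ℂ)) with he
    have hec : Continuous e := by
      have := hψ p
      rw [he]; fun_prop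
    have hed : ∀ k, HasLineDerivAt ℝ e (e k * (Complex.I * ((τ * ψ' p k : ℝ) : ℂ))) k v := by
      intro k
      have h1 : HasDerivAt (fun t : ℝ => ((τ * ψ p (k + t • v) : ℝ) : ℂ))
          ((τ * ψ' p k : ℝ) : ℂ) 0 := (HasDerivAt.const_mul τ (hd p k)).ofReal_comp
      have := (h1.const_mul Complex.I).cexp
      simpa [HasLineDerivAt, he] using this
    have hci : ∀ g : E → ℂ, Continuous g → (∀ k, k ∉ K → g k = 0) → Integrable g μ := by
      intro g hg hgK
      exact hg.integrable_of_hasCompactSupport (HasCompactSupport.intro hK fun k hk => hgK k hk)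
    have hψpc := hψc p
    have hbpc := hbc p
    have hb'pc := hb'c p
    have key := integral_bilinear_hasLineDerivAt_right_eq_neg_left_of_integrable
      (μ := μ) (B := ContinuousLinearMap.mul ℝ ℂ) (v := v) (f := b p) (f' := b' p) (g := e)
      (g' := fun k => e k * (Complex.I * ((τ * ψ' p k : ℝ) : ℂ)))
      (hci _ (by simp only [ContinuousLinearMap.mul_apply']; fun_prop)
        (fun k hk => by simp [hb'K p k hk]))
      (hci _ (by simp only [ContinuousLinearMap.mul_apply']; fun_prop)
        (fun k hk => by simp [hbK p k hk]))
      (hci _ (by simp only [ContinuousLinearMap.mul_apply']; fun_prop)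
        (fun k hk => by simp [hbK p k hk]))
      (fun k _ => hb1 p k) (fun k _ => hed k)
    have hL : ∫ k, e k * a p k ∂μ = (Complex.I * (τ:ℂ))⁻¹ * ∫ k, b p k * (e k * (Complex.I * ((τ * ψ' p k : ℝ) : ℂ))) ∂μ := by
      rw [← integral_const_mul]
      congr 1
      ext k
      have hτ' : (τ:ℂ) ≠ 0 := by exact_mod_cast hτ
      by_cases hak : a p k = 0
      · simp [hbdef, hak]
      · have h1 := hinv _ (hlow p k hak)
        have h2 : ((h (ψ' p k) : ℝ) : ℂ) * ((ψ' p k : ℝ) : ℂ) = 1 := by exact_mod_cast h1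
        simp only [hbdef]
        push_cast
        field_simp
        linear_combination (-e k) * h2
    simp only [ContinuousLinearMap.mul_apply'] at key
    rw [hL, key, norm_mul, norm_neg]
    have h4 := hC p τ hτ
    have h5 : ∫ k, b' p k * e k ∂μ = ∫ k, e k * b' p k ∂μ := by
      congr 1; ext k; ring
    rw [h5]
    have h6 : ‖(Complex.I * (τ:ℂ))⁻¹‖ = |τ|⁻¹ := by simp
    rw [h6, pow_succ, mul_inv]
    calc _ ≤ |τ|⁻¹ * (C * (|τ|^n)⁻¹) := by gcongr
      _ = _ := by ring

/-! ### Periodic functions -/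

lemma per_all {d : ℕ} {G : Type*} {F : (Fin d → ℝ) → G}
    (hF : ∀ (k : Fin d → ℝ) (j : Fin d), F (k + Pi.single j (2 * π)) = F k)
    (n : Fin d → ℤ) (k : Fin d → ℝ) : F (k + fun j => n j * (2 * π)) = F k := by
  have h1 : ∀ j : Fin d, Function.Periodic F (Pi.single j ((n j : ℝ) * (2 * π))) := by
    intro j
    have h0 : Function.Periodic F (Pi.single j (2 * π)) := fun k => hF k j
    have := h0.zsmul (n j)
    have e : (n j) • (Pi.single j (2 * π) : Fin d → ℝ) = Pi.single j ((n j : ℝ) * (2 * π)) := by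
      rw [← Pi.single_smul]; simp
    rwa [e] at this
  have h2 : ∀ s : Finset (Fin d), Function.Periodic F
      (∑ j ∈ s, Pi.single j ((n j : ℝ) * (2 * π))) := by
    intro s
    induction s using Finset.induction_on with
    | empty => intro k; simp
    | insert j s hj ih => rw [Finset.sum_insert hj]; exact (h1 j).add_period ih
  have h3 := h2 Finset.univ k
  rwa [Finset.univ_sum_single] at h3

lemma per_bdd {d : ℕ} {G : Type*} [NormedAddCommGroup G] {F : (Fin d → ℝ) → G}
    (hF : ∀ (k : Fin d → ℝ) (j : Fin d), F (k + Pi.single j (2 * π)) = F k)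
    (hc : Continuous F) : ∃ C, ∀ k, ‖F k‖ ≤ C := by
  obtain ⟨C, hC⟩ := (isCompact_univ_pi (fun _ : Fin d => isCompact_Icc (a := (0:ℝ))
    (b := 2 * π))).exists_bound_of_continuousOn hc.continuousOn
  refine ⟨C, fun k => ?_⟩
  rw [← per_all hF (fun j => - toIcoDiv Real.two_pi_pos 0 (k j)) k]
  refine hC _ (fun j _ => ?_)
  have h := toIcoMod_mem_Ico Real.two_pi_pos 0 (k j)
  have e : toIcoMod Real.two_pi_pos 0 (k j) =
    (k + fun j => ((- toIcoDiv Real.two_pi_pos 0 (k j) : ℤ) : ℝ) * (2 * π)) j := by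
    simp [toIcoMod, zsmul_eq_mul, sub_eq_add_neg]
  rw [← e]
  exact ⟨h.1, by simpa using h.2.le⟩

/-- smooth and periodic -/
def SP {d : ℕ} (f : (Fin d → ℝ) → ℝ) : Prop :=
  ContDiff ℝ (⊤ : ℕ∞) f ∧ ∀ (k : Fin d → ℝ) (j : Fin d), f (k + Pi.single j (2 * π)) = f k

lemma SP.fderiv_per {d : ℕ} {f : (Fin d → ℝ) → ℝ} (hf : SP f) (k : Fin d → ℝ) (j : Fin d) :
    fderiv ℝ f (k + Pi.single j (2 * π)) = fderiv ℝ f k := by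
  have : (fun k => f (k + Pi.single j (2 * π))) = f := funext fun k => hf.2 k j
  rw [← fderiv_comp_add_right, this]

lemma SP.fderiv {d : ℕ} {f : (Fin d → ℝ) → ℝ} (hf : SP f) (v : Fin d → ℝ) :
    SP (fun k => fderiv ℝ f k v) := by
  refine ⟨?_, fun k j => by simp only [hf.fderiv_per]⟩
  have := hf.1.fderiv_right (m := (⊤ : ℕ∞)) (by simp)
  exact this.clm_apply contDiff_const

lemma SP.lip {d : ℕ} {f : (Fin d → ℝ) → ℝ} (hf : SP f) :
    ∃ L, ∀ k k', |f k - f k'| ≤ L * ‖k - k'‖ := by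
  obtain ⟨L, hL⟩ := per_bdd hf.fderiv_per (hf.1.continuous_fderiv (by simp))
  refine ⟨L, fun k k' => ?_⟩
  exact convex_univ.norm_image_sub_le_of_norm_fderiv_le (𝕜 := ℝ)
    (fun x _ => hf.1.differentiable (by simp) x) (fun x _ => hL x) (Set.mem_univ k')
    (Set.mem_univ k)

lemma SP.line {d : ℕ} {f : (Fin d → ℝ) → ℝ} (hf : SP f) (k v : Fin d → ℝ) :
    HasLineDerivAt ℝ f (_root_.fderiv ℝ f k v) k v :=
  (hf.1.differentiable (by simp) k).hasFDerivAt.hasLineDerivAt v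

lemma line_sub {E A : Type*} [NormedAddCommGroup E] [NormedSpace ℝ E] [NormedAddCommGroup A]
    [NormedSpace ℝ A] {f : E → A} {f' : A} {k v y : E} (h : HasLineDerivAt ℝ f f' (k - y) v) :
    HasLineDerivAt ℝ (fun k => f (k - y)) f' k v := by
  have e : (fun t : ℝ => f (k + t • v - y)) = fun t : ℝ => f (k - y + t • v) := by
    ext t; congr 1; abel
  unfold HasLineDerivAt at *
  rw [e]; exact h

lemma UB_diff {d : ℕ} {P : Type*} (v : Fin d → ℝ) (y : P → Fin d → ℝ) (hy : ∀ p, y p ≠ 0)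
    (n : ℕ) : ∀ f : (Fin d → ℝ) → ℝ, SP f →
    UB v n (fun p k => (f k - f (k - y p)) / ‖y p‖) := by
  have key : ∀ f : (Fin d → ℝ) → ℝ, SP f →
      UB v 0 (fun p k => (f k - f (k - y p)) / ‖y p‖) := by
    intro f hf
    obtain ⟨L, hL⟩ := hf.lip
    have := hf.1.continuous
    refine ⟨fun p => by fun_prop, L, fun p k => ?_⟩
    have h1 := hL k (k - y p)
    have h2 : 0 < ‖y p‖ := norm_pos_iff.2 (hy p)
    rw [norm_div, norm_norm, div_le_iff₀ h2]
    simpa using h1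
  induction n with
  | zero => exact key
  | succ n ih =>
    intro f hf
    refine ⟨key f hf, _, fun p k => ?_, ih _ (hf.fderiv v)⟩
    exact HasDerivAt.div_const (HasDerivAt.sub (hf.line k v) (line_sub (hf.line _ v))) _

lemma UB_SP {d : ℕ} {P : Type*} (v : Fin d → ℝ) (n : ℕ) : ∀ f : (Fin d → ℝ) → ℝ, SP f →
    UB v n (fun (_ : P) k => f k) := by
  have key : ∀ f : (Fin d → ℝ) → ℝ, SP f → UB v 0 (fun (_ : P) k => f k) := by
    intro f hf
    obtain ⟨L, hL⟩ := per_bdd hf.2 hf.1.continuous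
    exact ⟨fun p => hf.1.continuous, L, fun p k => hL k⟩
  induction n with
  | zero => exact key
  | succ n ih =>
    intro f hf
    exact ⟨key f hf, _, fun p k => hf.line k v, ih _ (hf.fderiv v)⟩

lemma UB_zero {P E A : Type*} [NormedAddCommGroup E] [NormedSpace ℝ E] [NormedAddCommGroup A]
    [NormedSpace ℝ A] (v : E) (n : ℕ) : UB v n (fun (_ : P) (_ : E) => (0 : A)) := by
  induction n with
  | zero => exact ⟨fun _ => continuous_const, 0, by simp⟩
  | succ n ih =>
    exact ⟨⟨fun _ => continuous_const, 0, by simp⟩, _, fun p k => hasDerivAt_const _ _, ih⟩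

lemma UB_const {P E A : Type*} [NormedAddCommGroup E] [NormedSpace ℝ E] [NormedAddCommGroup A]
    [NormedSpace ℝ A] (v : E) (n : ℕ) (r : P → A) (C : ℝ) (hC : ∀ p, ‖r p‖ ≤ C) :
    UB v n (fun (p : P) (_ : E) => r p) := by
  cases n with
  | zero => exact ⟨fun _ => continuous_const, C, fun p _ => hC p⟩
  | succ n =>
    exact ⟨⟨fun _ => continuous_const, C, fun p _ => hC p⟩, _,
      fun p k => hasDerivAt_const _ _, UB_zero v n⟩

lemma UB_shift {E P : Type*} [NormedAddCommGroup E] [NormedSpace ℝ E]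
    (v : E) (y : P → E) (n : ℕ) : ∀ a : E → ℂ, ContDiff ℝ n a → HasCompactSupport a →
    UB v n (fun p k => a (k - y p)) := by
  have key : ∀ a : E → ℂ, Continuous a → HasCompactSupport a →
      UB v 0 (fun p k => a (k - y p)) := by
    intro a ha hs
    obtain ⟨C, hC⟩ := hs.exists_bound_of_continuous ha
    exact ⟨fun p => by fun_prop, C, fun p k => hC _⟩
  induction n with
  | zero => intro a ha hs; exact key a ha.continuous hs
  | succ n ih =>
    intro a ha hs
    refine ⟨key a ha.continuous hs, _, fun p k => ?_, ih (fun k => fderiv ℝ a k v) ?_ ?_⟩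
    · exact line_sub ((ha.differentiable (by simp) _).hasFDerivAt.hasLineDerivAt v)
    · exact (ha.fderiv_right (m := n) (by simp)).clm_apply contDiff_const
    · exact hs.fderiv_apply (𝕜 := ℝ) v

lemma norm_cexp (r : ℝ) : ‖Complex.exp (Complex.I * (r : ℂ))‖ = 1 := by
  rw [mul_comm]; exact Complex.norm_exp_ofReal_mul_I r

/-- The phase. -/
noncomputable def osc {d : ℕ} (γ : (Fin d → ℝ) → ℝ) (t : ℝ) (x : Fin d → ℝ) (k : Fin d → ℝ) : ℂ :=
  Complex.exp (Complex.I * (((∑ j, k j * x j) - 2 * t * γ k : ℝ) : ℂ))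

lemma rpow_half_le (d : ℕ) (s : ℝ) (hs : 1 ≤ s) : (s ^ d)⁻¹ ≤ (s ^ ((d:ℝ) / 2))⁻¹ := by
  rw [← Real.rpow_natCast]
  gcongr
  have : (0:ℝ) ≤ d := by positivity
  linarith

theorem nonstat {d : ℕ} (γ : (Fin d → ℝ) → ℝ) (hγ : SP γ) (a : (Fin d → ℝ) → ℂ)
    (ha : ContDiff ℝ d a) (hs : HasCompactSupport a) (j : Fin d) (c : ℝ) (hc : 0 < c)
    (hlow : ∀ k, a k ≠ 0 → c ≤ |fderiv ℝ γ k (Pi.single j 1)|) :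
    ∃ C, ∀ (t : ℝ) (x : Fin d → ℝ), 1 ≤ |t| → |x j| ≤ c * |t| →
      ‖∫ k, osc γ t x k * a k‖ ≤ C / |t| ^ ((d:ℝ) / 2) := by
  let P := {p : ℝ × (Fin d → ℝ) // 1 ≤ |p.1| ∧ |p.2 j| ≤ c * |p.1|}
  have hx : ∀ p : P, ‖p.1.2 j / p.1.1‖ ≤ c := by
    intro p
    rw [norm_div, Real.norm_eq_abs, Real.norm_eq_abs, div_le_iff₀ (by linarith [p.2.1])]
    exact p.2.2
  have hub : UB (Pi.single j (1:ℝ)) d (fun (p : P) k => p.1.2 j / p.1.1 +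
      (-2) * fderiv ℝ γ k (Pi.single j 1)) :=
    (UB_const _ _ (fun p : P => p.1.2 j / p.1.1) c hx).add
      ((UB_const _ _ (fun p : P => (-2 : ℝ)) 2 (by simp)).mul (UB_SP _ _ _ (hγ.fderiv _)))
  have haub : UB (Pi.single j (1:ℝ)) d (fun (p : P) k => a k) := by
    simpa using UB_shift (Pi.single j (1:ℝ)) (fun _ : P => (0 : Fin d → ℝ)) d a ha hs
  have hγc := hγ.1.continuous
  obtain ⟨C, hC⟩ := nsp (volume : Measure (Fin d → ℝ)) (Pi.single j (1:ℝ)) d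
    (fun (p : P) k => (∑ i, k i * p.1.2 i) / p.1.1 + (-2) * γ k) _ (fun p => by fun_prop)
    (fun p k => by
      refine HasDerivAt.add (HasDerivAt.div_const ?_ _) (HasDerivAt.const_mul _ (hγ.line k _))
      have : HasDerivAt (fun t : ℝ => ∑ i, (k + t • (Pi.single j (1:ℝ) : Fin d → ℝ)) i * p.1.2 i)
          (∑ i, (Pi.single j (1:ℝ) : Fin d → ℝ) i * p.1.2 i) 0 := by
        refine HasDerivAt.fun_sum fun i _ => HasDerivAt.mul_const ?_ _
        have h0 : HasDerivAt (fun t : ℝ => k i + t * (Pi.single j (1:ℝ) : Fin d → ℝ) i)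
          (1 * (Pi.single j (1:ℝ) : Fin d → ℝ) i) 0 :=
          ((hasDerivAt_id (0:ℝ)).mul_const _).const_add _
        simpa using h0
      simpa [Pi.single_apply] using this) hub (tsupport a) hs c hc d le_rfl
    (fun _ k => a k) haub (fun p k hk => image_eq_zero_of_notMem_tsupport hk)
    (fun p k hk => by
      have h1 := hlow k hk
      have h2 := hx p
      rw [Real.norm_eq_abs] at h2
      have h3 := abs_sub_abs_le_abs_sub (2 * fderiv ℝ γ k (Pi.single j 1)) (p.1.2 j / p.1.1)
      rw [abs_mul, abs_two, abs_sub_comm] at h3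
      have e : p.1.2 j / p.1.1 + (-2) * fderiv ℝ γ k (Pi.single j 1) =
        p.1.2 j / p.1.1 - 2 * fderiv ℝ γ k (Pi.single j 1) := by ring
      rw [e]; linarith)
  refine ⟨|C|, fun t x ht hxt => ?_⟩
  have ht0 : t ≠ 0 := by rintro rfl; simp at ht; linarith
  have h := hC ⟨(t, x), ht, hxt⟩ t ht0
  have e : ∀ k : Fin d → ℝ, t * ((∑ i, k i * x i) / t + (-2) * γ k) =
      (∑ j, k j * x j) - 2 * t * γ k := by
    intro k; field_simp; ring
  simp only [e] at h
  refine h.trans ?_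
  rw [div_eq_mul_inv]
  exact mul_le_mul (le_abs_self C) (rpow_half_le d _ ht) (by positivity) (abs_nonneg C)

theorem stat {d : ℕ} (γ : (Fin d → ℝ) → ℝ) (hγ : SP γ) (a : (Fin d → ℝ) → ℂ)
    (ha : ContDiff ℝ (d + 1 : ℕ) a) (hs : HasCompactSupport a) (c : ℝ) (hc : 0 < c)
    (hlow : ∀ k k' j, a k ≠ 0 → a k' ≠ 0 → |k j - k' j| = ‖k - k'‖ → c * ‖k - k'‖ ≤
      |fderiv ℝ γ k (Pi.single j 1) - fderiv ℝ γ k' (Pi.single j 1)|) :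
    ∃ C, ∀ (t : ℝ) (x : Fin d → ℝ), 1 ≤ |t| →
      ‖∫ k, osc γ t x k * a k‖ ≤ C / |t| ^ ((d:ℝ) / 2) := by
  have hγc := hγ.1.continuous
  have hac := ha.continuous
  have hsc : HasCompactSupport (fun k => (starRingEnd ℂ) (a k)) :=
    hs.comp_left (g := starRingEnd ℂ) (by simp)
  have hacc : ContDiff ℝ (d + 1 : ℕ) (fun k => (starRingEnd ℂ) (a k)) :=
    Complex.conjCLE.contDiff.comp ha
  have hj : ∀ j : Fin d, ∃ C, ∀ y : Fin d → ℝ, y ≠ 0 → |y j| = ‖y‖ → ∀ τ : ℝ, τ ≠ 0 →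
      ‖∫ k, Complex.exp (Complex.I * ((τ * ((γ k - γ (k - y)) / ‖y‖) : ℝ) : ℂ)) *
        (a k * (starRingEnd ℂ) (a (k - y)))‖ ≤ C * (|τ| ^ (d + 1))⁻¹ := by
    intro j
    let P := {y : Fin d → ℝ // y ≠ 0 ∧ |y j| = ‖y‖}
    have haub : UB (Pi.single j (1:ℝ)) (d+1) (fun (p : P) k => a k) := by
      simpa using UB_shift (Pi.single j (1:ℝ)) (fun _ : P => (0 : Fin d → ℝ)) (d+1) a ha hs
    have haub2 : UB (Pi.single j (1:ℝ)) (d+1) (fun (p : P) k => (starRingEnd ℂ) (a (k - p.1))) :=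
      UB_shift (Pi.single j (1:ℝ)) (fun p : P => p.1) (d+1) _ hacc hsc
    obtain ⟨C, hC⟩ := nsp (volume : Measure (Fin d → ℝ)) (Pi.single j (1:ℝ)) (d+1)
      (fun (p : P) k => (γ k - γ (k - p.1)) / ‖p.1‖) _
      (fun p => (hγc.sub (hγc.comp (continuous_id.sub continuous_const))).div_const _)
      (fun (p : P) k => HasDerivAt.div_const (HasDerivAt.sub (hγ.line k _) (line_sub (y := (p : P).1) (hγ.line _ _))) _)
      (UB_diff _ (fun p : P => p.1) (fun p => p.2.1) (d+1) _ (hγ.fderiv _))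
      (tsupport a) hs c hc (d+1) le_rfl
      (fun p k => a k * (starRingEnd ℂ) (a (k - p.1))) (haub.mul haub2)
      (fun p k hk => by rw [image_eq_zero_of_notMem_tsupport hk, zero_mul])
      (fun p k hk => by
        have h1 : a k ≠ 0 := left_ne_zero_of_mul hk
        have h2 : a (k - p.1) ≠ 0 := by
          intro h0; apply hk; simp [h0]
        have h3 := hlow k (k - p.1) j h1 h2 (by simpa using p.2.2)
        have h4 : 0 < ‖p.1‖ := norm_pos_iff.2 p.2.1
        rw [abs_div, abs_norm, le_div_iff₀ h4]
        simpa using h3)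
    exact ⟨C, fun y hy1 hy2 τ hτ => hC ⟨y, hy1, hy2⟩ τ hτ⟩
  choose Cj hCj using hj
  obtain ⟨Ca, hCa⟩ := hs.exists_bound_of_continuous hac
  have hCa0 : 0 ≤ Ca := (norm_nonneg _).trans (hCa 0)
  set C0 : ℝ := Ca * Ca * (volume : Measure (Fin d → ℝ)).real (tsupport a) with hC0
  have hC00 : 0 ≤ C0 := by positivity
  set M : ℝ := 2 ^ (d + 1) * (C0 + ∑ j, |Cj j|) with hM
  have hM0 : 0 ≤ M := by positivity
  set J : ℝ := ∫ y : Fin d → ℝ, (1 + ‖y‖) ^ (-((d:ℝ) + 1)) with hJ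
  have hJ0 : 0 ≤ J := integral_nonneg fun y => by positivity
  refine ⟨Real.sqrt (M * J), fun t x ht => ?_⟩
  have ht0 : 0 < |t| := by linarith
  set G : (Fin d → ℝ) → ℂ := fun k => osc γ t x k * a k with hG
  have hGc : Continuous G := by simp only [hG, osc]; fun_prop
  have hGs : HasCompactSupport G := hs.mul_left
  have hGi : Integrable G := hGc.integrable_of_hasCompactSupport hGs
  set H : (Fin d → ℝ) → ℂ := fun k => (starRingEnd ℂ) (G (-k)) with hH
  have hHi : Integrable H := by
    have h1 : Integrable (fun k => G (-k)) := hGi.comp_neg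
    exact Complex.conjCLE.toContinuousLinearMap.integrable_comp h1
  have hconv := integral_convolution (μ := (volume : Measure (Fin d → ℝ))) (ν := volume)
    (ContinuousLinearMap.mul ℝ ℂ) hGi hHi
  have hHint : ∫ k, H k = (starRingEnd ℂ) (∫ k, G k) := by
    rw [← integral_conj, ← integral_neg_eq_self]
    simp [hH]
  have hsq : ‖∫ k, G k‖ ^ 2 = ‖∫ y, convolution G H (ContinuousLinearMap.mul ℝ ℂ) volume y‖ := by
    rw [hconv, hHint]; simp [sq]
  have hpt : ∀ y, ‖convolution G H (ContinuousLinearMap.mul ℝ ℂ) volume y‖ ≤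
      M * (1 + ‖|t| • y‖) ^ (-((d:ℝ) + 1)) := by
    intro y
    have e1 : (1 + ‖|t| • y‖) ^ (-((d:ℝ) + 1)) = ((1 + |t| * ‖y‖) ^ (d + 1))⁻¹ := by
      rw [Real.rpow_neg (by positivity), norm_smul, norm_abs_eq_norm, Real.norm_eq_abs]
      congr 1
      rw [← Real.rpow_natCast]; push_cast; rfl
    rw [e1]
    have e2 : convolution G H (ContinuousLinearMap.mul ℝ ℂ) volume y =
        ∫ k, G k * (starRingEnd ℂ) (G (k - y)) := by
      simp only [convolution, hH, ContinuousLinearMap.mul_apply', neg_sub]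
    rw [e2]
    have hnG : ∀ k, ‖G k‖ = ‖a k‖ := by
      intro k; simp only [hG, osc, norm_mul, norm_cexp, one_mul]
    rcases le_or_gt (|t| * ‖y‖) 1 with hle | hgt
    · have h1 : ‖∫ k, G k * (starRingEnd ℂ) (G (k - y))‖ ≤ C0 := by
        rw [← setIntegral_eq_integral_of_forall_compl_eq_zero (s := tsupport a)]
        · refine norm_setIntegral_le_of_norm_le_const hs.measure_lt_top fun k _ => ?_
          rw [norm_mul, RCLike.norm_conj, hnG, hnG]
          exact mul_le_mul (hCa _) (hCa _) (norm_nonneg _) hCa0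
        · intro k hk
          simp [hG, image_eq_zero_of_notMem_tsupport hk]
      refine h1.trans ?_
      rw [← div_eq_mul_inv, le_div_iff₀ (by positivity)]
      calc C0 * (1 + |t| * ‖y‖) ^ (d + 1) ≤ C0 * 2 ^ (d+1) := by
            gcongr; linarith
        _ ≤ M := by
            rw [hM, mul_comm]; gcongr
            have : 0 ≤ ∑ j, |Cj j| := by positivity
            linarith
    · have hy0 : y ≠ 0 := by rintro rfl; simp at hgt; linarith
      have hyn : 0 < ‖y‖ := norm_pos_iff.2 hy0
      have hne : Nonempty (Fin d) := by
        by_contra hne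
        rw [not_nonempty_iff] at hne
        exact hy0 (Subsingleton.elim _ _)
      obtain ⟨j, hjmax⟩ := Finite.exists_max (fun j => |y j|)
      have hjn : |y j| = ‖y‖ := le_antisymm (norm_le_pi_norm y j)
        ((pi_norm_le_iff_of_nonneg (abs_nonneg _)).2 hjmax)
      have hτ : -2 * t * ‖y‖ ≠ 0 := by
        have : t ≠ 0 := abs_pos.1 ht0
        positivity
      have h1 := hCj j y hy0 hjn (-2 * t * ‖y‖) hτ
      have e3 : ∫ k, G k * (starRingEnd ℂ) (G (k - y)) =
        Complex.exp (Complex.I * ((∑ j, y j * x j : ℝ) : ℂ)) *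
        ∫ k, Complex.exp (Complex.I * ((-2 * t * ‖y‖ * ((γ k - γ (k - y)) / ‖y‖) : ℝ) : ℂ)) *
        (a k * (starRingEnd ℂ) (a (k - y))) := by
        rw [← integral_const_mul]
        congr 1
        ext k
        simp only [hG, osc, map_mul, ← Complex.exp_conj, Complex.conj_I, Complex.conj_ofReal]
        have e4 : Complex.exp (Complex.I * (((∑ j, k j * x j) - 2 * t * γ k : ℝ) : ℂ)) *
            Complex.exp (-Complex.I * (((∑ j, (k - y) j * x j) - 2 * t * γ (k - y) : ℝ) : ℂ)) =
            Complex.exp (Complex.I * ((∑ j, y j * x j : ℝ) : ℂ)) *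
            Complex.exp (Complex.I * ((-2 * t * ‖y‖ * ((γ k - γ (k - y)) / ‖y‖) : ℝ) : ℂ)) := by
          rw [← Complex.exp_add, ← Complex.exp_add]
          congr 1
          have e5 : -2 * t * ‖y‖ * ((γ k - γ (k - y)) / ‖y‖) = -2 * t * (γ k - γ (k - y)) := by
            field_simp
          have e6 : ∑ j, (k - y) j * x j = ∑ j, k j * x j - ∑ j, y j * x j := by
            rw [← Finset.sum_sub_distrib]
            exact Finset.sum_congr rfl fun i _ => by simp [sub_mul]
          rw [e5, e6]
          push_cast
          ring
        linear_combination (a k * (starRingEnd ℂ) (a (k - y))) * e4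
      rw [e3, norm_mul, norm_cexp, one_mul]
      refine h1.trans ?_
      have e7 : |-2 * t * ‖y‖| = 2 * (|t| * ‖y‖) := by
        rw [abs_mul, abs_mul, abs_norm]; norm_num; ring
      rw [e7]
      calc Cj j * ((2 * (|t| * ‖y‖)) ^ (d + 1))⁻¹ ≤ M * ((2 * (|t| * ‖y‖)) ^ (d + 1))⁻¹ := by
            gcongr
            have h2 : |Cj j| ≤ ∑ j, |Cj j| :=
              Finset.single_le_sum (f := fun j => |Cj j|) (fun i _ => abs_nonneg _) (Finset.mem_univ j)
            have h3 : (1:ℝ) ≤ 2 ^ (d+1) := one_le_pow₀ (by norm_num)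
            have h4 := le_abs_self (Cj j)
            have h5 : 0 ≤ C0 + ∑ j, |Cj j| := by positivity
            rw [hM]
            nlinarith
        _ ≤ _ := by
            gcongr
            linarith
  have hintg : Integrable (fun y : Fin d → ℝ => (1 + ‖y‖) ^ (-((d:ℝ) + 1))) :=
    integrable_one_add_norm (by simp)
  have hfin : ‖∫ k, G k‖ ^ 2 ≤ M * J * (|t| ^ d)⁻¹ := by
    rw [hsq]
    calc _ ≤ ∫ y : Fin d → ℝ, M * (1 + ‖|t| • y‖) ^ (-((d:ℝ) + 1)) := by
          refine norm_integral_le_of_norm_le ?_ (Filter.Eventually.of_forall hpt)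
          exact ((integrable_comp_smul_iff volume _ ht0.ne').2 hintg).const_mul M
      _ = M * J * (|t| ^ d)⁻¹ := by
          rw [integral_const_mul, Measure.integral_comp_smul_of_nonneg volume
            (fun y : Fin d → ℝ => (1 + ‖y‖) ^ (-((d:ℝ) + 1))) |t| (hR := ht0.le)]
          simp [hJ]; ring
  have hr : (|t| ^ ((d:ℝ) / 2)) ^ 2 = |t| ^ d := by
    rw [← Real.rpow_natCast, ← Real.rpow_mul ht0.le, ← Real.rpow_natCast]
    congr 1; push_cast; ring
  refine (sq_le_sq₀ (norm_nonneg _) (by positivity)).1 ?_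
  rw [div_pow, Real.sq_sqrt (by positivity), hr, div_eq_mul_inv]; exact hfin

/-! ### The dispersion relation -/

lemma gamma_rad_pos {d : ℕ} {ω : ℝ} (hω : 0 < ω) {lam : Fin d → ℝ} (hlam : ∀ j, 0 < lam j)
    (k : Fin d → ℝ) : ω ^ 2 ≤ ω ^ 2 + 4 * ∑ j, lam j * Real.sin (k j / 2) ^ 2 := by
  have : 0 ≤ ∑ j, lam j * Real.sin (k j / 2) ^ 2 :=
    Finset.sum_nonneg fun j _ => mul_nonneg (hlam j).le (sq_nonneg _)
  linarith

lemma gamma_SP {d : ℕ} {ω : ℝ} (hω : 0 < ω) {lam : Fin d → ℝ} (hlam : ∀ j, 0 < lam j)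
    {γ : (Fin d → ℝ) → ℝ}
    (hγ : ∀ k, γ k = Real.sqrt (ω ^ 2 + 4 * ∑ j, lam j * Real.sin (k j / 2) ^ 2)) : SP γ := by
  have h0 : 0 < ω ^ 2 := by positivity
  constructor
  · rw [funext hγ]
    refine ContDiff.sqrt ?_ fun k => (h0.trans_le (gamma_rad_pos hω hlam k)).ne'
    refine contDiff_const.add (contDiff_const.mul (ContDiff.sum fun j _ => contDiff_const.mul ?_))
    exact ((Real.contDiff_sin.comp ((contDiff_apply ℝ ℝ j).div_const 2))).pow 2
  · intro k j
    rw [hγ, hγ]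
    congr 3
    refine Finset.sum_congr rfl fun i _ => ?_
    by_cases hij : i = j
    · subst hij
      have : (k + (Pi.single i (2 * π) : Fin d → ℝ)) i / 2 = k i / 2 + π := by simp; ring
      rw [this, Real.sin_add_pi, neg_sq]
    · simp [hij]

lemma gamma_deriv {d : ℕ} {ω : ℝ} (hω : 0 < ω) {lam : Fin d → ℝ} (hlam : ∀ j, 0 < lam j)
    {γ : (Fin d → ℝ) → ℝ}
    (hγ : ∀ k, γ k = Real.sqrt (ω ^ 2 + 4 * ∑ j, lam j * Real.sin (k j / 2) ^ 2))
    (k : Fin d → ℝ) (j : Fin d) :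
    fderiv ℝ γ k (Pi.single j 1) = lam j * Real.sin (k j) / γ k := by
  have h0 : 0 < ω ^ 2 := by positivity
  refine HasDerivAt.unique ((gamma_SP hω hlam hγ).line k (Pi.single j 1)) ?_
  have h1 : ∀ i, HasDerivAt (fun t : ℝ => lam i *
      Real.sin ((k + t • (Pi.single j (1:ℝ) : Fin d → ℝ)) i / 2) ^ 2)
      (if i = j then lam j * Real.sin (k j) / 2 else 0) 0 := by
    intro i
    by_cases hij : i = j
    · subst hij
      have h2 : HasDerivAt (fun t : ℝ => (k + t • (Pi.single i (1:ℝ) : Fin d → ℝ)) i / 2)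
          (1 / 2) 0 := by
        have h3 : HasDerivAt (fun t : ℝ => (k i + t) / 2) (1 / 2) 0 :=
          ((hasDerivAt_id (0:ℝ)).const_add (k i)).div_const 2
        simpa using h3
      have h4 := (h2.sin.pow 2).const_mul (lam i)
      simp only [zero_smul, add_zero] at h4
      rw [if_pos rfl]
      have : Real.sin (k i) = 2 * Real.sin (k i / 2) * Real.cos (k i / 2) := by
        rw [← Real.sin_two_mul]; congr 1; ring
      have e : lam i * Real.sin (k i) / 2 = lam i * (((2 : ℕ) : ℝ) * Real.sin (k i / 2) ^ (2 - 1) *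
          (Real.cos (k i / 2) * (1 / 2))) := by
        rw [this]; push_cast; ring
      rw [e]
      exact h4
    · rw [if_neg hij]
      simp only [Pi.add_apply, Pi.smul_apply, Pi.single_apply, if_neg hij, smul_zero, add_zero]
      exact hasDerivAt_const _ _
  have h5 := ((HasDerivAt.fun_sum (u := Finset.univ) fun i _ => h1 i).const_mul 4).const_add (ω ^ 2)
  have h6 := h5.sqrt (by
    simp only [zero_smul, add_zero]
    exact (h0.trans_le (gamma_rad_pos hω hlam k)).ne')
  simp only [← hγ, zero_smul, add_zero, Finset.sum_ite_eq', Finset.mem_univ, if_true] at h6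
  have e : lam j * Real.sin (k j) / γ k = 4 * (lam j * Real.sin (k j) / 2) / (2 * γ k) := by
    have : γ k ≠ 0 := by
      rw [hγ]; exact (Real.sqrt_pos.2 (h0.trans_le (gamma_rad_pos hω hlam k))).ne'
    field_simp; ring
  rw [e]
  exact h6

lemma sin_sub_lower {s s' : ℝ} (hs : |s| ≤ 1) (hs' : |s'| ≤ 1) :
    |s - s'| / 4 ≤ |Real.sin s - Real.sin s'| := by
  rw [Real.sin_sub_sin, abs_mul, abs_mul, abs_two]
  have hpi := Real.pi_gt_three
  have hpi4 := Real.pi_le_four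
  rw [abs_le] at hs hs'
  have h1 : |(s - s') / 2| ≤ 1 := by rw [abs_le]; constructor <;> linarith
  have h2 := Real.mul_abs_le_abs_sin (x := (s - s') / 2) (by linarith)
  have h3 : (1:ℝ) / 2 ≤ |Real.cos ((s + s') / 2)| := by
    refine le_trans ?_ (le_abs_self _)
    have := Real.one_sub_sq_div_two_le_cos (x := (s + s') / 2)
    nlinarith
  have h4 : (1:ℝ) / 2 ≤ 2 / π := by rw [div_le_div_iff₀] <;> linarith
  have h5 : |(s - s') / 2| = |s - s'| / 2 := by rw [abs_div, abs_two]
  rw [h5] at h2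
  have h6 : |s - s'| / 4 ≤ |Real.sin ((s - s') / 2)| := by
    have : (1:ℝ) / 2 * (|s - s'| / 2) ≤ 2 / π * (|s - s'| / 2) := by gcongr
    linarith
  have : 2 * |Real.sin ((s - s') / 2)| * (1 / 2) ≤
    2 * |Real.sin ((s - s') / 2)| * |Real.cos ((s + s') / 2)| := by gcongr
  linarith

/-- The geometric facts on `γ` that are used. -/
lemma gamma_geom {d : ℕ} {ω : ℝ} (hω : 0 < ω) {lam : Fin d → ℝ} (hlam : ∀ j, 0 < lam j)
    {γ : (Fin d → ℝ) → ℝ}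
    (hγ : ∀ k, γ k = Real.sqrt (ω ^ 2 + 4 * ∑ j, lam j * Real.sin (k j / 2) ^ 2)) :
    ∃ ε c : ℝ, 0 < ε ∧ ε ≤ 1 / 2 ∧ 0 < c ∧
      (∀ k j, Real.sin ε ≤ |Real.sin (k j)| → c ≤ |fderiv ℝ γ k (Pi.single j 1)|) ∧
      (∀ k k' j, (∃ b : ℝ, (b = 0 ∨ b = π) ∧ |k j - b| ≤ 2 * ε ∧ |k' j - b| ≤ 2 * ε) →
        |k j - k' j| = ‖k - k'‖ → c * ‖k - k'‖ ≤
          |fderiv ℝ γ k (Pi.single j 1) - fderiv ℝ γ k' (Pi.single j 1)|) := by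
  have hSP := gamma_SP hω hlam hγ
  obtain ⟨L0, hL0⟩ := hSP.lip
  obtain ⟨Γ0, hΓ0⟩ := per_bdd hSP.2 hSP.1.continuous
  set L := |L0| + 1 with hLdef
  set Γ := |Γ0| + 1 with hΓdef
  have hLpos : 0 < L := by positivity
  have hΓpos : 0 < Γ := by positivity
  have hL : ∀ k k', |γ k - γ k'| ≤ L * ‖k - k'‖ := fun k k' => (hL0 k k').trans (by
    gcongr; rw [hLdef]; linarith [le_abs_self L0])
  have hωγ : ∀ k, ω ≤ γ k := by
    intro k; rw [hγ]; exact Real.le_sqrt_of_sq_le (gamma_rad_pos hω hlam k)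
  have hΓ : ∀ k, γ k ≤ Γ := fun k => by
    have := (le_abs_self (γ k)).trans (hΓ0 k)
    rw [hΓdef]; linarith [le_abs_self Γ0]
  obtain ⟨l, hl, hll⟩ : ∃ l : ℝ, 0 < l ∧ ∀ j, l ≤ lam j := by
    rcases isEmpty_or_nonempty (Fin d) with h | h
    · exact ⟨1, one_pos, fun j => h.elim j⟩
    · obtain ⟨j, hj⟩ := Finite.exists_min lam
      exact ⟨lam j, hlam j, hj⟩
  set ε := min (1 / 2) (ω ^ 2 / (16 * Γ * L)) with hε
  have hεpos : 0 < ε := by positivity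
  have hε1 : ε ≤ 1 / 2 := min_le_left _ _
  have hε2 : ε ≤ ω ^ 2 / (16 * Γ * L) := min_le_right _ _
  have hsinpos : 0 < Real.sin ε :=
    Real.sin_pos_of_pos_of_lt_pi hεpos (by linarith [Real.pi_gt_three])
  have hγpos : ∀ k, 0 < γ k := fun k => hω.trans_le (hωγ k)
  refine ⟨ε, min (l * Real.sin ε / Γ) (l / (8 * Γ)), hεpos, hε1, by positivity, ?_, ?_⟩
  · intro k j hk
    refine (min_le_left _ _).trans ?_
    rw [gamma_deriv hω hlam hγ, abs_div, abs_mul, abs_of_pos (hlam j), abs_of_pos (hγpos k)]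
    exact div_le_div₀ (mul_nonneg (hlam j).le (abs_nonneg _))
      (mul_le_mul (hll j) hk hsinpos.le (hlam j).le) (hγpos k) (hΓ k)
  · rintro k k' j ⟨b, hb, hkb, hkb'⟩ hmax
    rw [gamma_deriv hω hlam hγ, gamma_deriv hω hlam hγ]
    set Y := ‖k - k'‖ with hY
    have hY0 : 0 ≤ Y := norm_nonneg _
    have hsin : |Real.sin (k j) - Real.sin (k' j)| ≥ Y / 4 ∧ |Real.sin (k' j)| ≤ 2 * ε := by
      have h1 := sin_sub_lower (s := k j - b) (s' := k' j - b) (by linarith) (by linarith)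
      have h2 := (Real.abs_sin_le_abs (x := k' j - b)).trans hkb'
      rw [sub_sub_sub_cancel_right, hmax] at h1
      rcases hb with rfl | rfl
      · simp only [sub_zero] at h1 h2; exact ⟨h1, h2⟩
      · rw [Real.sin_sub_pi, Real.sin_sub_pi] at h1
        rw [Real.sin_sub_pi, abs_neg] at h2
        refine ⟨?_, h2⟩
        rwa [neg_sub_neg, abs_sub_comm] at h1
    have e : lam j * Real.sin (k j) / γ k - lam j * Real.sin (k' j) / γ k' =
        lam j * ((Real.sin (k j) - Real.sin (k' j)) / γ k -
          Real.sin (k' j) * ((γ k - γ k') / (γ k * γ k'))) := by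
      have := (hγpos k).ne'
      have := (hγpos k').ne'
      field_simp; ring
    rw [e, abs_mul, abs_of_pos (hlam j)]
    have h3 : Y / (4 * Γ) ≤ |(Real.sin (k j) - Real.sin (k' j)) / γ k| := by
      rw [abs_div, abs_of_pos (hγpos k), ← div_div]
      exact div_le_div₀ (abs_nonneg _) hsin.1 (hγpos k) (hΓ k)
    have h4 : |Real.sin (k' j) * ((γ k - γ k') / (γ k * γ k'))| ≤ Y / (8 * Γ) := by
      rw [abs_mul, abs_div, abs_of_pos (mul_pos (hγpos k) (hγpos k'))]
      have h5 : |γ k - γ k'| / (γ k * γ k') ≤ L * Y / ω ^ 2 := by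
        refine div_le_div₀ (by positivity) (hL k k') (by positivity) ?_
        rw [sq]; exact mul_le_mul (hωγ k) (hωγ k') hω.le (hγpos k).le
      calc _ ≤ (2 * (ω ^ 2 / (16 * Γ * L))) * (L * Y / ω ^ 2) := by
            refine mul_le_mul (hsin.2.trans (by linarith)) h5 ?_ (by positivity)
            exact div_nonneg (abs_nonneg _) (mul_pos (hγpos k) (hγpos k')).le
        _ = Y / (8 * Γ) := by field_simp; ring
    have h6 := abs_sub_abs_le_abs_sub ((Real.sin (k j) - Real.sin (k' j)) / γ k)
      (Real.sin (k' j) * ((γ k - γ k') / (γ k * γ k')))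
    have h7 : Y / (4 * Γ) = Y / (8 * Γ) + Y / (8 * Γ) := by field_simp; ring
    calc min (l * Real.sin ε / Γ) (l / (8 * Γ)) * Y ≤ l / (8 * Γ) * Y := by
          gcongr; exact min_le_right _ _
      _ = l * (Y / (8 * Γ)) := by ring
      _ ≤ _ := mul_le_mul (hll j) (by linarith) (by positivity) (hlam j).le

/-! ### Cutoffs and unfolding -/

lemma prod_sum' {d m : ℕ} (f : Fin d → Fin m → ℝ) :
    ∏ j, ∑ i, f j i = ∑ n : Fin d → Fin m, ∏ j, f j (n j) := by
  rw [Finset.prod_univ_sum, Fintype.piFinset_univ]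

lemma unfold_torus {d : ℕ} (F : (Fin d → ℝ) → ℂ) (hFc : Continuous F)
    (hF : ∀ (k : Fin d → ℝ) (j : Fin d), F (k + Pi.single j (2 * π)) = F k)
    (χ : ℝ → ℝ) (hχ : Continuous χ)
    (hsupp : ∀ s, χ s ≠ 0 → s ∈ Set.Ioc (-(3 * π)) (3 * π))
    (hsum : ∀ s ∈ Set.Ioc (-π) π, χ (s - 2 * π) + χ s + χ (s + 2 * π) = 1) :
    ∫ k in (Set.univ.pi fun _ : Fin d => Set.Ioc (-π) π), F k =
      ∫ k, F k * ((∏ j, χ (k j) : ℝ) : ℂ) := by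
  have hpi := Real.pi_pos
  let sh : Fin 3 → ℤ := ![-1, 0, 1]
  let v : (Fin d → Fin 3) → Fin d → ℝ := fun n j => sh (n j) * (2 * π)
  let Q : Set (Fin d → ℝ) := Set.univ.pi fun _ : Fin d => Set.Ioc (-π) π
  have hQ : MeasurableSet Q := MeasurableSet.univ_pi fun _ => measurableSet_Ioc
  let H : (Fin d → ℝ) → ℂ := fun k => F k * ((∏ j, χ (k j) : ℝ) : ℂ)
  let T : (Fin d → Fin 3) → (Fin d → ℝ) → ℂ := fun n => ((fun k => k - v n) ⁻¹' Q).indicator H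
  have hHc : Continuous H := by fun_prop
  have hHs : HasCompactSupport H := by
    refine HasCompactSupport.intro (isCompact_univ_pi
      (fun _ : Fin d => isCompact_Icc (a := -(3 * π)) (b := 3 * π))) ?_
    intro k hk
    simp only [Set.mem_univ_pi, not_forall] at hk
    obtain ⟨j, hj⟩ := hk
    have : χ (k j) = 0 := by
      by_contra h
      exact hj (Set.Ioc_subset_Icc_self (hsupp _ h))
    simp only [H]
    rw [Finset.prod_eq_zero (Finset.mem_univ j) this]; simp
  have hHi : Integrable H := hHc.integrable_of_hasCompactSupport hHs
  have hTi : ∀ n, Integrable (T n) := fun n =>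
    hHi.indicator (hQ.preimage (by fun_prop))
  have hA : ∀ k, Q.indicator F k = ∑ n, T n (k + v n) := by
    intro k
    by_cases hk : k ∈ Q
    · rw [Set.indicator_of_mem hk]
      have h1 : ∀ n, T n (k + v n) = F k * ((∏ j, χ (k j + sh (n j) * (2 * π)) : ℝ) : ℂ) := by
        intro n
        have : k + v n ∈ (fun k => k - v n) ⁻¹' Q := by simpa using hk
        simp only [T, Set.indicator_of_mem this, H]
        have h2 : F (k + v n) = F k := per_all hF (fun j => sh (n j)) k
        rw [h2]; rfl
      simp only [h1]
      rw [← Finset.mul_sum, ← Complex.ofReal_sum,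
        ← prod_sum' (fun j i => χ (k j + sh i * (2 * π)))]
      have : ∀ j, ∑ i, χ (k j + sh i * (2 * π)) = 1 := by
        intro j
        rw [Fin.sum_univ_three, ← hsum (k j) (hk j (Set.mem_univ j))]
        simp [sh, sub_eq_add_neg]
      simp [this]
    · rw [Set.indicator_of_notMem hk]
      symm
      refine Finset.sum_eq_zero fun n _ => Set.indicator_of_notMem ?_ _
      simpa using hk
  have hB : ∀ k, ∑ n, T n k = H k := by
    intro k
    by_cases hH0 : H k = 0
    · rw [hH0]
      refine Finset.sum_eq_zero fun n _ => ?_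
      show ((fun k => k - v n) ⁻¹' Q).indicator H k = 0
      by_cases h : k ∈ (fun k => k - v n) ⁻¹' Q
      · rw [Set.indicator_of_mem h]; exact hH0
      · exact Set.indicator_of_notMem h _
    · have hk : ∀ j, k j ∈ Set.Ioc (-(3 * π)) (3 * π) := by
        intro j
        refine hsupp _ fun h => hH0 ?_
        simp only [H]
        rw [Finset.prod_eq_zero (Finset.mem_univ j) h]; simp
      classical
      have h1 : ∀ n, T n k = H k * ((∏ j, (Set.Ioc (-π) π).indicator (fun _ => (1:ℝ))
          (k j - sh (n j) * (2 * π)) : ℝ) : ℂ) := by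
        intro n
        by_cases hn : k - v n ∈ Q
        · have h2 : ∀ j, (Set.Ioc (-π) π).indicator (fun _ => (1:ℝ))
            (k j - sh (n j) * (2 * π)) = 1 := fun j => Set.indicator_of_mem (hn j (Set.mem_univ j)) _
          simp only [h2, T]
          rw [Set.indicator_of_mem (by exact hn)]; simp
        · simp only [T]
          rw [Set.indicator_of_notMem (by exact hn)]
          simp only [Q, Set.mem_univ_pi, not_forall] at hn
          obtain ⟨j, hj⟩ := hn
          rw [Finset.prod_eq_zero (Finset.mem_univ j) (Set.indicator_of_notMem hj _)]
          simp
      simp only [h1]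
      rw [← Finset.mul_sum, ← Complex.ofReal_sum, ← prod_sum' (fun j i =>
        (Set.Ioc (-π) π).indicator (fun _ => (1:ℝ)) (k j - sh i * (2 * π)))]
      have : ∀ j, ∑ i, (Set.Ioc (-π) π).indicator (fun _ => (1:ℝ)) (k j - sh i * (2 * π)) = 1 := by
        intro j
        obtain ⟨ha, hb⟩ := hk j
        rw [Fin.sum_univ_three]
        simp only [sh, Matrix.cons_val_zero, Matrix.cons_val_one, Matrix.cons_val,
          Set.indicator_apply, Set.mem_Ioc]
        push_cast
        rcases le_or_gt (k j) (-π) with h | h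
        · rw [if_pos (by constructor <;> linarith), if_neg (by intro h; linarith [h.1]),
            if_neg (by intro h; linarith [h.1])]; norm_num
        · rcases le_or_gt (k j) π with h' | h'
          · rw [if_neg (by intro h; linarith [h.2]), if_pos (by constructor <;> linarith),
              if_neg (by intro h; linarith [h.1])]; norm_num
          · rw [if_neg (by intro h; linarith [h.2]), if_neg (by intro h; linarith [h.2]),
              if_pos (by constructor <;> linarith)]; norm_num
      simp [this]
  calc ∫ k in Q, F k = ∫ k, Q.indicator F k := (integral_indicator hQ).symm
    _ = ∫ k, ∑ n, T n (k + v n) := by simp only [hA]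
    _ = ∑ n, ∫ k, T n (k + v n) := integral_finsetSum _ fun n _ => (hTi n).comp_add_right (v n)
    _ = ∑ n, ∫ k, T n k := by simp only [integral_add_right_eq_self]
    _ = ∫ k, ∑ n, T n k := (integral_finsetSum _ fun n _ => hTi n).symm
    _ = ∫ k, H k := by simp only [hB]

/-- A one-dimensional partition of unity adapted to the critical points. -/
lemma cutoffs (ε : ℝ) (hε : 0 < ε) (hε1 : ε ≤ 1 / 2) : ∃ w : Fin 4 → ℝ → ℝ,
    (∀ i, ContDiff ℝ (⊤ : ℕ∞) (w i)) ∧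
    (∀ i s, w i s ≠ 0 → s ∈ Set.Ioc (-(3 * π)) (3 * π)) ∧
    (∀ s ∈ Set.Ioc (-π) π, ∑ i, w i (s - 2 * π) + ∑ i, w i s + ∑ i, w i (s + 2 * π) = 1) ∧
    (∀ i, (∀ s, w i s ≠ 0 → Real.sin ε ≤ |Real.sin s|) ∨
      ∃ b : ℝ, (b = 0 ∨ b = π) ∧ ∀ s, w i s ≠ 0 → |s - b| ≤ 2 * ε) := by
  have hpi := Real.pi_gt_three
  let θ : ℝ → ℝ := fun s => Real.smoothTransition (s / ε)
  have hθ0 : ∀ s, s ≤ 0 → θ s = 0 := fun s hs =>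
    Real.smoothTransition.zero_of_nonpos (div_nonpos_of_nonpos_of_nonneg hs hε.le)
  have hθ1 : ∀ s, ε ≤ s → θ s = 1 := fun s hs =>
    Real.smoothTransition.one_of_one_le ((one_le_div hε).2 hs)
  have hθc : ContDiff ℝ (⊤ : ℕ∞) θ := Real.smoothTransition.contDiff.comp (contDiff_id.div_const ε)
  let W : ℝ → ℝ → ℝ → ℝ := fun p q s => θ (s - p) - θ (s - q)
  have hWc : ∀ p q, ContDiff ℝ (⊤ : ℕ∞) (W p q) := fun p q =>
    (hθc.comp (contDiff_id.sub contDiff_const)).sub (hθc.comp (contDiff_id.sub contDiff_const))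
  have hWs : ∀ p q s, p ≤ q → W p q s ≠ 0 → p ≤ s ∧ s ≤ q + ε := by
    intro p q s hpq hne
    constructor
    · by_contra h
      push Not at h
      apply hne
      simp only [W]
      rw [hθ0 _ (by linarith), hθ0 _ (by linarith), sub_zero]
    · by_contra h
      push Not at h
      apply hne
      simp only [W]
      rw [hθ1 _ (by linarith), hθ1 _ (by linarith), sub_self]
  have hsin : ∀ s, ε ≤ s → s ≤ π - ε → Real.sin ε ≤ Real.sin s := by
    intro s h1 h2
    rcases le_total s (π / 2) with h | h
    · exact Real.sin_le_sin_of_le_of_le_pi_div_two (by linarith) h h1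
    · rw [← Real.sin_pi_sub s]
      exact Real.sin_le_sin_of_le_of_le_pi_div_two (by linarith) (by linarith) (by linarith)
  have key : ∀ s, ∑ i, (![W (-2 * ε) ε, W ε (π - 2 * ε), W (π - 2 * ε) (π + ε),
      W (π + ε) (2 * π - 2 * ε)] : Fin 4 → ℝ → ℝ) i s = θ (s + 2 * ε) - θ (s - (2 * π - 2 * ε)) := by
    intro s
    rw [Fin.sum_univ_four]
    simp only [Matrix.cons_val_zero, Matrix.cons_val_one, Matrix.cons_val, W]
    have : s - -2 * ε = s + 2 * ε := by ring
    rw [this]; ring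
  refine ⟨![W (-2 * ε) ε, W ε (π - 2 * ε), W (π - 2 * ε) (π + ε), W (π + ε) (2 * π - 2 * ε)],
    ?_, ?_, ?_, ?_⟩
  · intro i; fin_cases i <;> exact hWc _ _
  · intro i s hs
    fin_cases i
    all_goals
      have := hWs _ _ s (by linarith) hs
      constructor <;> linarith [this.1, this.2]
  · intro s hs
    obtain ⟨h1, h2⟩ := hs
    rw [key, key, key]
    have e1 : s - 2 * π + 2 * ε = s - (2 * π - 2 * ε) := by ring
    have e2 : s + 2 * π - (2 * π - 2 * ε) = s + 2 * ε := by ring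
    rw [e1, e2, hθ0 (s - 2 * π - (2 * π - 2 * ε)) (by linarith),
      hθ1 (s + 2 * π + 2 * ε) (by linarith)]
    ring
  · intro i
    fin_cases i
    · right
      refine ⟨0, Or.inl rfl, fun s hs => ?_⟩
      have := hWs _ _ s (by linarith) hs
      rw [abs_le]; constructor <;> linarith [this.1, this.2]
    · left
      intro s hs
      have := hWs _ _ s (by linarith) hs
      exact (hsin s (by linarith [this.1]) (by linarith [this.2])).trans (le_abs_self _)
    · right
      refine ⟨π, Or.inr rfl, fun s hs => ?_⟩
      have := hWs _ _ s (by linarith) hs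
      rw [abs_le]; constructor <;> linarith [this.1, this.2]
    · left
      intro s hs
      have := hWs _ _ s (by linarith) hs
      have h1 := hsin (s - π) (by linarith [this.1]) (by linarith [this.2])
      rw [Real.sin_sub_pi] at h1
      exact h1.trans (neg_le_abs _)

/-- The unweighted estimate in the region `|x| ≤ c |t|`. -/
theorem main_region {d : ℕ} {ω : ℝ} (hω : 0 < ω) {lam : Fin d → ℝ} (hlam : ∀ j, 0 < lam j)
    {γ : (Fin d → ℝ) → ℝ}
    (hγ : ∀ k, γ k = Real.sqrt (ω ^ 2 + 4 * ∑ j, lam j * Real.sin (k j / 2) ^ 2))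
    (η : (Fin d → ℝ) → ℂ) (hη : ContDiff ℝ (d + 3 : ℕ) η)
    (hper : ∀ (k : Fin d → ℝ) (j : Fin d), η (k + Pi.single j (2 * π)) = η k) :
    ∃ C c : ℝ, 0 < c ∧ ∀ (t : ℝ) (x : Fin d → ℤ), 1 ≤ |t| → (∀ j, |(x j : ℝ)| ≤ c * |t|) →
      ‖∫ k in (Set.univ.pi fun _ : Fin d => Set.Ioc (-π) π), osc γ t (fun j => (x j : ℝ)) k * η k‖
        ≤ C / |t| ^ ((d:ℝ) / 2) := by
  have hSP := gamma_SP hω hlam hγ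
  obtain ⟨ε, c, hε, hε1, hc, hlow1, hlow2⟩ := gamma_geom hω hlam hγ
  obtain ⟨w, hwc, hws, hwsum, hwdi⟩ := cutoffs ε hε hε1
  let a : (Fin d → Fin 4) → (Fin d → ℝ) → ℂ := fun n k => η k * ((∏ j, w (n j) (k j) : ℝ) : ℂ)
  have hane : ∀ n k, a n k ≠ 0 → ∀ j, w (n j) (k j) ≠ 0 := by
    intro n k h j h0
    apply h
    simp only [a]
    rw [Finset.prod_eq_zero (Finset.mem_univ j) h0]; simp
  have hac : ∀ n, ContDiff ℝ (d + 3 : ℕ) (a n) := by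
    intro n
    have hp : ContDiff ℝ (d + 3 : ℕ) (fun k : Fin d → ℝ => ∏ j, w (n j) (k j)) :=
      contDiff_prod fun j _ =>
        (contDiff_infty.1 (hwc (n j)) (d + 3)).comp (contDiff_apply ℝ ℝ j)
    exact hη.mul (Complex.ofRealCLM.contDiff.comp hp)
  have has : ∀ n, HasCompactSupport (a n) := by
    intro n
    refine HasCompactSupport.intro (isCompact_univ_pi
      (fun _ : Fin d => isCompact_Icc (a := -(3 * π)) (b := 3 * π))) ?_
    intro k hk
    by_contra h
    exact hk fun j _ => Set.Ioc_subset_Icc_self (hws _ _ (hane n k h j))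
  have hn : ∀ n, ∃ C, ∀ (t : ℝ) (x : Fin d → ℝ), 1 ≤ |t| → (∀ j, |x j| ≤ c * |t|) →
      ‖∫ k, osc γ t x k * a n k‖ ≤ C / |t| ^ ((d:ℝ) / 2) := by
    intro n
    by_cases hj : ∃ j, ∀ s, w (n j) s ≠ 0 → Real.sin ε ≤ |Real.sin s|
    · obtain ⟨j, hj⟩ := hj
      obtain ⟨C, hC⟩ := nonstat γ hSP (a n) ((hac n).of_le (by exact_mod_cast by omega)) (has n) j c hc
        (fun k hk => hlow1 k j (hj _ (hane n k hk j)))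
      exact ⟨C, fun t x ht hx => hC t x ht (hx j)⟩
    · push Not at hj
      obtain ⟨C, hC⟩ := stat γ hSP (a n) ((hac n).of_le (by exact_mod_cast by omega)) (has n) c hc
        (fun k k' j hk hk' hm => by
          refine hlow2 k k' j ?_ hm
          rcases hwdi (n j) with h | ⟨b, hb, h⟩
          · obtain ⟨s, hs1, hs2⟩ := hj j
            exact absurd (h s hs1) (not_le.2 hs2)
          · exact ⟨b, hb, h _ (hane n k hk j), h _ (hane n k' hk' j)⟩)
      exact ⟨C, fun t x ht _ => hC t x ht⟩
  choose C hC using hn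
  refine ⟨∑ n, C n, c, hc, fun t x ht hx => ?_⟩
  have hγc := hSP.1.continuous
  have hηc := hη.continuous
  have hoc : Continuous (osc γ t (fun j => (x j : ℝ))) := by unfold osc; fun_prop
  rw [unfold_torus (fun k => osc γ t (fun j => (x j : ℝ)) k * η k) (hoc.mul hηc) ?_
    (fun s => ∑ i, w i s) (continuous_finsetSum _ fun i _ => (hwc i).continuous) ?_ hwsum]
  · have e : ∀ k, osc γ t (fun j => (x j : ℝ)) k * η k * ((∏ j, ∑ i, w i (k j) : ℝ) : ℂ) =
        ∑ n, osc γ t (fun j => (x j : ℝ)) k * a n k := by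
      intro k
      rw [prod_sum' (fun j i => w i (k j)), Complex.ofReal_sum, Finset.mul_sum]
      refine Finset.sum_congr rfl fun n _ => ?_
      simp only [a]; ring
    simp only [e]
    have hi : ∀ n, Integrable (fun k => osc γ t (fun j => (x j : ℝ)) k * a n k) := fun n =>
      (hoc.mul (hac n).continuous).integrable_of_hasCompactSupport (has n).mul_left
    rw [integral_finsetSum _ fun n _ => hi n, Finset.sum_div]
    exact (norm_sum_le _ _).trans (Finset.sum_le_sum fun n _ => hC n t _ ht hx)
  · intro k j
    simp only [hper]
    congr 1
    unfold osc
    rw [hSP.2]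
    have e : ∑ i, (k + (Pi.single j (2 * π) : Fin d → ℝ)) i * (x i : ℝ) =
        ∑ i, k i * (x i : ℝ) + 2 * π * x j := by
      simp only [Pi.add_apply, add_mul, Finset.sum_add_distrib, Pi.single_apply, ite_mul, zero_mul,
        Finset.sum_ite_eq', Finset.mem_univ, if_true]
    rw [e]
    have e2 : Complex.I * ((∑ i, k i * (x i : ℝ) + 2 * π * x j - 2 * t * γ k : ℝ) : ℂ) =
      Complex.I * ((∑ i, k i * (x i : ℝ) - 2 * t * γ k : ℝ) : ℂ) + (x j : ℤ) * (2 * π * Complex.I) := by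
      push_cast; ring
    rw [e2, Complex.exp_add, Complex.exp_int_mul_two_pi_mul_I, mul_one]
  · intro s hs
    obtain ⟨i, _, hi⟩ := Finset.exists_ne_zero_of_sum_ne_zero hs
    exact hws i s hi

end WDE

open WDE
theorem weighted_dispersive_estimate (d : ℕ) (ω : ℝ) (hω : 0 < ω)
    (lam : Fin d → ℝ) (hlam : ∀ j, 0 < lam j) (γ : (Fin d → ℝ) → ℝ)
    (hγ : ∀ k, γ k = Real.sqrt (ω ^ 2 + 4 * ∑ j, lam j * Real.sin (k j / 2) ^ 2))
    (η : (Fin d → ℝ) → ℂ) (hη : ContDiff ℝ (d + 3 : ℕ) η)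
    (hper : ∀ (k : Fin d → ℝ) (j : Fin d), η (k + Pi.single j (2 * π)) = η k) :
    ∃ C : ℝ, ∀ (t : ℝ) (x : Fin d → ℤ), 1 ≤ |t| →
      ‖∫ k in (Set.univ.pi fun _ : Fin d => Set.Ioc (-π) π),
          Complex.exp (Complex.I *
            (((∑ j, k j * (x j : ℝ)) - 2 * t * γ k : ℝ) : ℂ)) * η k‖ ≤
        C * ((⨆ k : Fin d → ℝ, ‖η k‖) / |t| ^ ((d : ℝ) / 2) +
          (⨆ n : Fin (d + 4), ⨆ m : Fin (n : ℕ) → Fin d, ⨆ k : Fin d → ℝ,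
              ‖iteratedFDeriv ℝ (n : ℕ) η k (fun i => Pi.single (m i) 1)‖) *
            (3 + ∑ j, |(x j : ℝ)|) ^ (d + 3) / |t| ^ (((d : ℝ) + 1) / 2)) := by
  obtain ⟨Cη, hCη⟩ := per_bdd hper hη.continuous
  set A : ℝ := ⨆ k : Fin d → ℝ, ‖η k‖ with hA
  set B : ℝ := ⨆ n : Fin (d + 4), ⨆ m : Fin (n : ℕ) → Fin d, ⨆ k : Fin d → ℝ,
    ‖iteratedFDeriv ℝ (n : ℕ) η k (fun i => Pi.single (m i) 1)‖ with hB
  have hAle : ∀ k, ‖η k‖ ≤ A := fun k => le_ciSup (f := fun k => ‖η k‖) ⟨Cη, by rintro _ ⟨k, rfl⟩; exact hCη k⟩ k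
  have hAB : A ≤ B := by
    let g : Fin (d + 4) → ℝ := fun n => ⨆ m : Fin (n : ℕ) → Fin d, ⨆ k : Fin d → ℝ,
      ‖iteratedFDeriv ℝ (n : ℕ) η k (fun i => Pi.single (m i) 1)‖
    have h1 : g ⟨0, by omega⟩ ≤ B := le_ciSup (f := g) (Set.finite_range _).bddAbove _
    refine le_trans ?_ h1
    simp only [g, iteratedFDeriv_zero_apply]
    exact le_ciSup (f := fun m : Fin 0 → Fin d => ⨆ k : Fin d → ℝ, ‖η k‖)
      (Set.finite_range _).bddAbove (fun i => i.elim0)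
  by_cases hη0 : ∀ k, η k = 0
  · refine ⟨0, fun t x ht => ?_⟩
    simp [hη0]
  push Not at hη0
  obtain ⟨k0, hk0⟩ := hη0
  have hApos : 0 < A := (norm_pos_iff.2 hk0).trans_le (hAle k0)
  have hBpos : 0 < B := hApos.trans_le hAB
  obtain ⟨C, c, hc, hC⟩ := main_region hω hlam hγ η hη hper
  set Q : Set (Fin d → ℝ) := Set.univ.pi fun _ : Fin d => Set.Ioc (-π) π with hQ
  set V : ℝ := (volume : Measure (Fin d → ℝ)).real Q with hV
  have hV0 : 0 ≤ V := by positivity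
  have hQfin : (volume : Measure (Fin d → ℝ)) Q < ⊤ := by
    rw [hQ, volume_pi_pi]; exact ENNReal.prod_lt_top fun i _ => by simp
  refine ⟨|C| / A + A * V / (B * c ^ (d + 3)), fun t x ht => ?_⟩
  have ht0 : 0 < |t| := by linarith
  set S : ℝ := ∑ j, |(x j : ℝ)| with hS
  have hS0 : 0 ≤ S := by positivity
  by_cases hx : ∀ j, |(x j : ℝ)| ≤ c * |t|
  · have h1 := hC t x ht hx
    refine h1.trans ?_
    calc C / |t| ^ ((d:ℝ) / 2) ≤ |C| / |t| ^ ((d:ℝ) / 2) := by gcongr; exact le_abs_self C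
      _ = |C| / A * (A / |t| ^ ((d:ℝ) / 2)) := by field_simp
      _ ≤ _ := by
        refine mul_le_mul ?_ ?_ (by positivity) (by positivity)
        · have : 0 ≤ A * V / (B * c ^ (d + 3)) := by positivity
          linarith
        · have : 0 ≤ B * (3 + S) ^ (d + 3) / |t| ^ (((d : ℝ) + 1) / 2) := by positivity
          linarith
  · push Not at hx
    obtain ⟨j, hj⟩ := hx
    have hSj : c * |t| ≤ 3 + S := by
      have : |(x j : ℝ)| ≤ S :=
        Finset.single_le_sum (f := fun j => |(x j : ℝ)|) (fun i _ => abs_nonneg _) (Finset.mem_univ j)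
      linarith
    have h1 : ‖∫ k in Q, Complex.exp (Complex.I *
            (((∑ j, k j * (x j : ℝ)) - 2 * t * γ k : ℝ) : ℂ)) * η k‖ ≤ A * V := by
      refine norm_setIntegral_le_of_norm_le_const hQfin fun k _ => ?_
      rw [norm_mul, norm_cexp, one_mul]; exact hAle k
    refine h1.trans ?_
    have h2 : c ^ (d + 3) ≤ (3 + S) ^ (d + 3) / |t| ^ (((d : ℝ) + 1) / 2) := by
      rw [le_div_iff₀ (by positivity)]
      calc c ^ (d + 3) * |t| ^ (((d : ℝ) + 1) / 2) ≤ c ^ (d + 3) * |t| ^ (d + 3) := by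
            gcongr
            rw [← Real.rpow_natCast]
            apply Real.rpow_le_rpow_of_exponent_le ht
            push_cast
            have : (0:ℝ) ≤ d := by positivity
            linarith
        _ = (c * |t|) ^ (d + 3) := by rw [mul_pow]
        _ ≤ _ := by gcongr
    calc A * V = A * V / (B * c ^ (d + 3)) * (B * c ^ (d + 3)) := by field_simp
      _ ≤ A * V / (B * c ^ (d + 3)) * (B * ((3 + S) ^ (d + 3) / |t| ^ (((d : ℝ) + 1) / 2))) := by
        gcongr
      _ ≤ _ := by
        refine mul_le_mul ?_ ?_ (by positivity) (by positivity)
        · have : 0 ≤ |C| / A := by positivity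
          linarith
        · have : 0 ≤ A / |t| ^ ((d:ℝ) / 2) := by positivity
          rw [← mul_div_assoc]
          linarith
end
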